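/- arXiv:1401.3682 — 4 statements merged into one kernel-verified Lean document; each statement's English description precedes it below -/
import Mathlib

section
/- Achievability part of the broadcast-phase capacity theorem: Let W₁ : A → S(H₁) and W₂ : A → S(H₂) be classical-quantum channels with a common finite input alphabet A (modeling the bidirectional broadcast channel from the relay node to node 1 and node 2). Then for every probability distribution P on A and all ε > 0, δ > 0, for all sufficiently large n there exists an (n, J₁, J₂) bidirectional broadcast code such that (1/n)·log₂ J₁ ≥ χ(P;W₁) − δ, (1/n)·log₂ J₂ ≥ χ(P;W₂) − δ, and both average errors e₁ and e₂ of the code are at most ε. -/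
open scoped BigOperators ComplexOrder

noncomputable section

/-- The Loewner order on operators: `A ≤ B` iff `B - A` is positive semidefinite. -/
def loewnerLE {ι : Type*} [Fintype ι] (A B : Matrix ι ι ℂ) : Prop := (B - A).PosSemidef

/-- A quantum state: a positive semidefinite operator with unit trace. -/
def IsState {ι : Type*} [Fintype ι] (ρ : Matrix ι ι ℂ) : Prop := ρ.PosSemidef ∧ ρ.trace = 1

/-- The von Neumann entropy `S(ρ) = −tr(ρ log₂ ρ)`, computed via eigenvalues. -/
noncomputable def vnEntropy {ι : Type*} [Fintype ι] [DecidableEq ι] (ρ : Matrix ι ι ℂ) : ℝ :=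
  if h : ρ.IsHermitian then -∑ i, h.eigenvalues i * Real.logb 2 (h.eigenvalues i) else 0

/-- The trace norm `‖A‖₁ = tr √(AᴴA)` (sum of singular values). -/
noncomputable def traceNorm {ι : Type*} [Fintype ι] [DecidableEq ι] (A : Matrix ι ι ℂ) : ℝ :=
  ∑ i, Real.sqrt ((Matrix.posSemidef_conjTranspose_mul_self A).1.eigenvalues i)

/-- A probability distribution on a finite set. -/
def IsDist {A : Type*} [Fintype A] (P : A → ℝ) : Prop := (∀ a, 0 ≤ P a) ∧ ∑ a, P a = 1

/-- The Holevo quantity `χ(P;W) = S(PW) − Σ_a P(a) S(W(a))`. -/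
noncomputable def holevo {A ι : Type*} [Fintype A] [Fintype ι] [DecidableEq ι]
    (P : A → ℝ) (W : A → Matrix ι ι ℂ) : ℝ :=
  vnEntropy (∑ a, (P a : ℂ) • W a) - ∑ a, P a * vnEntropy (W a)

/-- Tensor product `M 0 ⊗ ⋯ ⊗ M (n−1)` of matrices, realized on the index set `Fin n → ι`. -/
def tensorPow {n : ℕ} {ι : Type*} [Fintype ι] (M : Fin n → Matrix ι ι ℂ) :
    Matrix (Fin n → ι) (Fin n → ι) ℂ :=
  Matrix.of fun i j => ∏ k, M k (i k) (j k)

/-- The `n`-fold extension `W^{⊗n}(xⁿ) = W(x₁) ⊗ ⋯ ⊗ W(xₙ)` of a cq channel. -/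
def cqPow {A ι : Type*} [Fintype ι] (W : A → Matrix ι ι ℂ) (n : ℕ) (x : Fin n → A) :
    Matrix (Fin n → ι) (Fin n → ι) ℂ :=
  tensorPow fun k => W (x k)

/-- A POVM: positive semidefinite operators summing to at most the identity. -/
def IsPOVM {ι J : Type*} [Fintype ι] [DecidableEq ι] [Fintype J] (D : J → Matrix ι ι ℂ) : Prop :=
  (∀ j, (D j).PosSemidef) ∧ loewnerLE (∑ j, D j) 1

/-- Existence of an `(n, J₁, J₂)` bidirectional broadcast code for the cq channels `W₁`, `W₂`
with average errors `e₁ ≤ ε₁` and `e₂ ≤ ε₂`. -/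
def BroadcastCodeExists {A ι₁ ι₂ : Type*} [Fintype A] [Fintype ι₁] [DecidableEq ι₁]
    [Fintype ι₂] [DecidableEq ι₂]
    (W1 : A → Matrix ι₁ ι₁ ℂ) (W2 : A → Matrix ι₂ ι₂ ℂ)
    (n J1 J2 : ℕ) (ε₁ ε₂ : ℝ) : Prop :=
  ∃ (w : Fin J1 × Fin J2 → Fin n → A)
    (D1 : Fin J2 → Fin J1 → Matrix (Fin n → ι₁) (Fin n → ι₁) ℂ)
    (D2 : Fin J1 → Fin J2 → Matrix (Fin n → ι₂) (Fin n → ι₂) ℂ),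
    (∀ m2, IsPOVM (D1 m2)) ∧ (∀ m1, IsPOVM (D2 m1)) ∧
    (∀ m2, ((J1 : ℝ))⁻¹ * ∑ m1, ((1 - D1 m2 m1) * cqPow W1 n (w (m1, m2))).trace.re ≤ ε₁) ∧
    (∀ m1, ((J2 : ℝ))⁻¹ * ∑ m2, ((1 - D2 m1 m2) * cqPow W2 n (w (m1, m2))).trace.re ≤ ε₂)


/-- Existence of an `(n, J₁, J₂)` code for the cq multiple-access channel `W`
with average error at most `ε`. -/
def MACCodeExists {Y1 Y2 ι : Type*} [Fintype ι] [DecidableEq ι]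
    (W : Y1 → Y2 → Matrix ι ι ℂ) (n J1 J2 : ℕ) (ε : ℝ) : Prop :=
  ∃ (u : Fin J1 → Fin n → Y1) (v : Fin J2 → Fin n → Y2)
    (D : Fin J1 × Fin J2 → Matrix (Fin n → ι) (Fin n → ι) ℂ),
    IsPOVM D ∧
    (1 / ((J1 : ℝ) * (J2 : ℝ))) * ∑ m : Fin J1 × Fin J2,
      ((1 - D m) * tensorPow (fun k => W (u m.1 k) (v m.2 k))).trace.re ≤ ε

end
section ProbHelpers

lemma bp_sum_prod {I Z : Type*} [Fintype I] [DecidableEq I] [Fintype Z] (q : I → Z → ℝ) :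
    ∑ x : I → Z, ∏ i, q i (x i) = ∏ i, ∑ z, q i z := by
  rw [Finset.prod_univ_sum]; simp

lemma bp_sum_prod_one {I Z : Type*} [Fintype I] [DecidableEq I] [Fintype Z] (q : Z → ℝ)
    (hq : ∑ z, q z = 1) : ∑ x : I → Z, ∏ i, q (x i) = 1 := by
  rw [bp_sum_prod (fun _ => q)]; simp [hq]

lemma bp_marginal {I J Z : Type*} [Fintype I] [DecidableEq I] [Fintype J] [DecidableEq J]
    [Fintype Z] (q : Z → ℝ) (hq : ∑ z, q z = 1) (e : I → J) (he : Function.Injective e)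
    (F : (I → Z) → ℝ) :
    ∑ w : J → Z, (∏ j, q (w j)) * F (fun i => w (e i)) = ∑ x : I → Z, (∏ i, q (x i)) * F x := by
  classical
  let e' : I ≃ {j // j ∈ Set.range e} := Equiv.ofInjective e he
  rw [← (Equiv.piEquivPiSubtypeProd (fun j => j ∈ Set.range e) (fun _ => Z)).symm.sum_comp]
  rw [Fintype.sum_prod_type]
  rw [← (Equiv.arrowCongr e' (Equiv.refl Z)).sum_comp]
  refine Finset.sum_congr rfl fun x _ => ?_
  have key : ∀ v : {j // ¬ j ∈ Set.range e} → Z,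
      (∏ j, q ((Equiv.piEquivPiSubtypeProd (fun j => j ∈ Set.range e) (fun _ => Z)).symm
        ((Equiv.arrowCongr e' (Equiv.refl Z)) x, v) j)) = (∏ i, q (x i)) * ∏ j, q (v j) := by
    intro v
    rw [← Fintype.prod_subtype_mul_prod_subtype (fun j => j ∈ Set.range e)]
    congr 1
    · symm
      refine @Fintype.prod_equiv _ _ _ _ (_) _ e' _ _ fun i => ?_
      have hi : ∃ y, e y = ↑(e' i) := (e' i).2
      simp [Equiv.piEquivPiSubtypeProd]
      rw [dif_pos hi]
    · refine Finset.prod_congr rfl fun j _ => ?_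
      have := j.2
      simp only [Equiv.piEquivPiSubtypeProd, Equiv.coe_fn_symm_mk, dif_neg this]
  have key2 : ∀ v : {j // ¬ j ∈ Set.range e} → Z,
      (fun i => (Equiv.piEquivPiSubtypeProd (fun j => j ∈ Set.range e) (fun _ => Z)).symm
        ((Equiv.arrowCongr e' (Equiv.refl Z)) x, v) (e i)) = x := by
    intro v; funext i
    have h : (⟨e i, i, rfl⟩ : {j // j ∈ Set.range e}) = e' i := rfl
    simp [Equiv.piEquivPiSubtypeProd, h]
  simp only [key, key2]
  rw [← Finset.sum_mul, ← Finset.mul_sum, bp_sum_prod_one q hq, mul_one]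

lemma bp_second_moment {Z : Type*} [Fintype Z] (q : Z → ℝ) (hq : ∑ z, q z = 1)
    (g : Z → ℝ) (hg : ∑ z, q z * g z = 0) (n : ℕ) :
    ∑ x : Fin n → Z, (∏ k, q (x k)) * (∑ k, g (x k)) ^ 2 = n * ∑ z, q z * g z ^ 2 := by
  induction n with
  | zero => simp
  | succ n ih =>
    rw [← (Fin.consEquiv (fun _ => Z)).sum_comp, Fintype.sum_prod_type]
    have : ∀ (z : Z) (x : Fin n → Z),
        (∏ k, q ((Fin.consEquiv (fun _ => Z)) (z, x) k)) *
          (∑ k, g ((Fin.consEquiv (fun _ => Z)) (z, x) k)) ^ 2 =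
        (q z * g z ^ 2) * (∏ k, q (x k)) + (q z * g z) * (2 * ((∏ k, q (x k)) * ∑ k, g (x k)))
         + q z * ((∏ k, q (x k)) * (∑ k, g (x k)) ^ 2) := by
      intro z x
      simp only [Fin.consEquiv, Equiv.coe_fn_mk, Fin.prod_univ_succ, Fin.sum_univ_succ,
        Fin.cons_zero, Fin.cons_succ]
      ring
    simp only [this, Finset.sum_add_distrib, ← Finset.mul_sum, ih, ← Finset.sum_mul, hg, hq,
      bp_sum_prod_one q hq]
    push_cast; ring

lemma bp_cheb {Z : Type*} [Fintype Z] (q : Z → ℝ) (hq0 : ∀ z, 0 ≤ q z) (hq : ∑ z, q z = 1)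
    (f : Z → ℝ) (η ε : ℝ) (hη : 0 < η) (hε : 0 < ε) :
    ∃ N : ℕ, ∀ n : ℕ, N ≤ n → ∀ B : (Fin n → Z) → Prop, ∀ _ : DecidablePred B,
      (∀ x, B x → 0 < ∏ k, q (x k) →
        n * η ≤ |∑ k, f (x k) - n * ∑ z, q z * f z|) →
      ∑ x : Fin n → Z, (if B x then ∏ k, q (x k) else 0) ≤ ε := by
  set μ := ∑ z, q z * f z with hμ
  set V := ∑ z, q z * (f z - μ) ^ 2 with hV
  have hV0 : 0 ≤ V := Finset.sum_nonneg fun z _ => mul_nonneg (hq0 z) (sq_nonneg _)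
  obtain ⟨N, hN⟩ := exists_nat_ge (V / (ε * η ^ 2))
  refine ⟨max N 1, fun n hn B _ hB => ?_⟩
  have hn1 : (1 : ℝ) ≤ n := by exact_mod_cast (le_max_right N 1).trans hn
  have hnN : V / (ε * η ^ 2) ≤ n := hN.trans (by exact_mod_cast (le_max_left N 1).trans hn)
  have hm := bp_second_moment q hq (fun z => f z - μ) (by
    simp only [mul_sub, Finset.sum_sub_distrib, ← Finset.sum_mul, hq, ← hμ]; ring) n
  have hn0 : (0 : ℝ) < n := by linarith
  have h1 : ∑ x : Fin n → Z, (n * η) ^ 2 * (if B x then ∏ k, q (x k) else 0) ≤ n * V := by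
    rw [hV, ← hm]
    refine Finset.sum_le_sum fun x _ => ?_
    have hp : 0 ≤ ∏ k, q (x k) := Finset.prod_nonneg fun k _ => hq0 _
    split_ifs with h
    · rcases hp.eq_or_lt with h0 | h0
      · rw [← h0]; simp
      · have := hB x h h0
        have e : ∑ k, (f (x k) - μ) = ∑ k, f (x k) - n * μ := by
          simp [Finset.sum_sub_distrib]
        rw [e, mul_comm, ← sq_abs (∑ k, f (x k) - n * μ)]
        gcongr
    · rw [mul_zero]; positivity
  rw [← Finset.mul_sum] at h1
  rw [div_le_iff₀ (by positivity)] at hnN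
  have h2 : (n * η) ^ 2 * ∑ x : Fin n → Z, (if B x then ∏ k, q (x k) else 0) ≤ (n * η) ^ 2 * ε := by
    refine h1.trans ?_
    calc n * V ≤ n * (n * (ε * η ^ 2)) := by gcongr
      _ = _ := by ring
  exact le_of_mul_le_mul_left h2 (by positivity)

end ProbHelpers

section MatHelpers
open scoped MatrixOrder
open Matrix

variable {ι : Type*} [Fintype ι] [DecidableEq ι]

lemma bp_tr_nonneg {A B : Matrix ι ι ℂ} (hA : 0 ≤ A) (hB : 0 ≤ B) :
    0 ≤ (A * B).trace.re := by
  obtain ⟨C, rfl⟩ := CStarAlgebra.nonneg_iff_eq_star_mul_self.1 hB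
  rw [star_eq_conjTranspose]
  rw [← mul_assoc, Matrix.trace_mul_comm, ← mul_assoc]
  have := ((Matrix.nonneg_iff_posSemidef.1 hA).mul_mul_conjTranspose_same C).trace_nonneg
  exact (Complex.le_def.1 this).1

lemma bp_tr_mono {A A' B : Matrix ι ι ℂ} (hA : A ≤ A') (hB : 0 ≤ B) :
    (A * B).trace.re ≤ (A' * B).trace.re := by
  have := bp_tr_nonneg (sub_nonneg.2 hA) hB
  rw [sub_mul, trace_sub, Complex.sub_re] at this
  linarith

lemma bp_tr_mono' {A A' B : Matrix ι ι ℂ} (hA : A ≤ A') (hB : 0 ≤ B) :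
    (B * A).trace.re ≤ (B * A').trace.re := by
  rw [trace_mul_comm B, trace_mul_comm B]; exact bp_tr_mono hA hB

/-- orthogonal projection -/
def BPProj (Q : Matrix ι ι ℂ) : Prop := Qᴴ = Q ∧ Q * Q = Q

lemma BPProj.nonneg {Q : Matrix ι ι ℂ} (h : BPProj Q) : 0 ≤ Q := by
  have := star_mul_self_nonneg Q
  rwa [star_eq_conjTranspose, h.1, h.2] at this

lemma BPProj.compl {Q : Matrix ι ι ℂ} (h : BPProj Q) : BPProj (1 - Q) := by
  refine ⟨by simp [h.1], ?_⟩
  rw [sub_mul, mul_sub, mul_sub, h.2]; simp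

lemma BPProj.le_one {Q : Matrix ι ι ℂ} (h : BPProj Q) : Q ≤ 1 :=
  sub_nonneg.1 h.compl.nonneg

/-- Product `E_{k-1} ⋯ E_0`. -/
def bpSeq (E : ℕ → Matrix ι ι ℂ) : ℕ → Matrix ι ι ℂ
  | 0 => 1
  | k + 1 => E k * bpSeq E k

lemma bpSeq_tele (E : ℕ → Matrix ι ι ℂ) (hE : ∀ i, BPProj (E i)) (N : ℕ) :
    1 - (bpSeq E N)ᴴ * bpSeq E N =
      ∑ i ∈ Finset.range N, ((1 - E i) * bpSeq E i)ᴴ * ((1 - E i) * bpSeq E i) := by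
  induction N with
  | zero => simp [bpSeq]
  | succ N ih =>
    rw [Finset.sum_range_succ, ← ih]
    have h1 : ((1 - E N) * bpSeq E N)ᴴ * ((1 - E N) * bpSeq E N)
        = (bpSeq E N)ᴴ * ((1 - E N)ᴴ * (1 - E N)) * bpSeq E N := by
      simp only [conjTranspose_mul, mul_assoc]
    have h2 : (bpSeq E (N+1))ᴴ * bpSeq E (N+1)
        = (bpSeq E N)ᴴ * ((E N)ᴴ * (E N)) * bpSeq E N := by
      simp only [bpSeq, conjTranspose_mul, mul_assoc]
    rw [h1, h2, (hE N).compl.1, (hE N).compl.2, (hE N).1, (hE N).2]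
    noncomm_ring

lemma bpSeq_tele' (E : ℕ → Matrix ι ι ℂ) (N : ℕ) :
    1 - bpSeq E N = ∑ i ∈ Finset.range N, (1 - E i) * bpSeq E i := by
  induction N with
  | zero => simp [bpSeq]
  | succ N ih =>
    rw [Finset.sum_range_succ, ← ih, bpSeq]
    noncomm_ring

/-- Gao's union bound. -/
lemma bp_union (E : ℕ → Matrix ι ι ℂ) (hE : ∀ i, BPProj (E i)) (N : ℕ) :
    1 - (bpSeq E N)ᴴ * bpSeq E N ≤ (4 : ℝ) • ∑ i ∈ Finset.range N, (1 - E i) := by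
  set A := bpSeq E N with hA
  set D := 1 - Aᴴ * A with hD
  set b : ℕ → Matrix ι ι ℂ := fun i => (1 - E i) * bpSeq E i with hb
  set S := ∑ i ∈ Finset.range N, (1 - E i) with hS
  have h1 : D = ∑ i ∈ Finset.range N, (b i)ᴴ * b i := bpSeq_tele E hE N
  have h2 : 1 - A = ∑ i ∈ Finset.range N, b i := bpSeq_tele' E N
  have h3 : 0 ≤ (1 - A)ᴴ * (1 - A) := star_mul_self_nonneg (1 - A)
  have h3' : (1 - A)ᴴ * (1 - A) = (1 - A) + (1 - A)ᴴ - D := by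
    rw [hD, conjTranspose_sub, conjTranspose_one]; noncomm_ring
  have h4 : ∀ i, (b i) + (b i)ᴴ ≤ (2 : ℝ) • (1 - E i) + (1 / 2 : ℝ) • ((b i)ᴴ * b i) := by
    intro i
    have := star_mul_self_nonneg ((2 : ℝ) • (1 - E i) - b i)
    have e : star ((2 : ℝ) • (1 - E i) - b i) * ((2 : ℝ) • (1 - E i) - b i)
        = (2 : ℝ) • ((2 : ℝ) • (1 - E i) + (1 / 2 : ℝ) • ((b i)ᴴ * b i) - (b i + (b i)ᴴ)) := by
      have c1 : (1 - E i) * b i = b i := by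
        simp only [hb]; rw [← mul_assoc, (hE i).compl.2]
      have c2 : (b i)ᴴ * (1 - E i) = (b i)ᴴ := by
        conv_rhs => rw [← c1, conjTranspose_mul, (hE i).compl.1]
      have c3 := (hE i).compl.2
      have c4 := (hE i).compl.1
      rw [star_sub, star_smul, star_eq_conjTranspose, star_eq_conjTranspose, c4]
      generalize 1 - E i = G at *
      simp only [sub_mul, mul_sub, smul_mul_assoc, mul_smul_comm, star_trivial, c1, c2, c3]
      module
    rw [e] at this
    have := smul_nonneg (show (0:ℝ) ≤ 1/2 by norm_num) this
    rw [smul_smul] at this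
    norm_num at this
    simpa using this
  have h5 : (1 - A) + (1 - A)ᴴ ≤ (2 : ℝ) • S + (1 / 2 : ℝ) • D := by
    rw [h2, conjTranspose_sum, h1, hS, Finset.smul_sum, Finset.smul_sum, ← Finset.sum_add_distrib,
      ← Finset.sum_add_distrib]
    exact Finset.sum_le_sum fun i _ => h4 i
  rw [h3'] at h3
  have h6 : D ≤ (2 : ℝ) • S + (1 / 2 : ℝ) • D := (sub_nonneg.1 h3).trans h5
  have h7 : 0 ≤ (2 : ℝ) • S + (1 / 2 : ℝ) • D - D := sub_nonneg.2 h6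
  have h8 := smul_nonneg (show (0:ℝ) ≤ 2 by norm_num) h7
  have e : (2 : ℝ) • ((2 : ℝ) • S + (1 / 2 : ℝ) • D - D) = (4 : ℝ) • S - D := by module
  rw [e] at h8
  exact sub_nonneg.1 h8

lemma bp_conj_mono {A B : Matrix ι ι ℂ} (h : A ≤ B) (C : Matrix ι ι ℂ) :
    Cᴴ * A * C ≤ Cᴴ * B * C := by
  have := (Matrix.le_iff.1 h).conjTranspose_mul_mul_same C
  rw [Matrix.le_iff]
  convert this using 1
  noncomm_ring

/-- `Π (1-Q) Π ≤ 2 (1-Q) + 2 (1-Π)` -/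
lemma bp_gentle {Q R : Matrix ι ι ℂ} (hQ : BPProj Q) (hR : BPProj R) :
    R * (1 - Q) * R ≤ (2 : ℝ) • (1 - Q) + (2 : ℝ) • (1 - R) := by
  have h1 : 0 ≤ (1 + (1 - R)) * (1 - Q) * (1 + (1 - R)) := by
    have := bp_conj_mono hQ.compl.nonneg (1 + (1 - R))
    have e : (1 + (1 - R))ᴴ = 1 + (1 - R) := by
      rw [conjTranspose_add, hR.compl.1]; simp
    rw [e] at this; simpa using this
  have h2 : (1 - R) * (1 - Q) * (1 - R) ≤ 1 - R := by
    have := bp_conj_mono hQ.compl.le_one (1 - R)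
    rw [hR.compl.1] at this
    rwa [mul_one, hR.compl.2] at this
  have h3 : R * (1 - Q) * R + (1 + (1 - R)) * (1 - Q) * (1 + (1 - R)) =
     (2 : ℝ) • (1 - Q) + (2 : ℝ) • ((1 - R) * (1 - Q) * (1 - R)) := by
    simp only [two_smul]; noncomm_ring
  calc R * (1 - Q) * R ≤ R * (1 - Q) * R + (1 + (1 - R)) * (1 - Q) * (1 + (1 - R)) :=
        le_add_of_nonneg_right h1
    _ = _ := h3
    _ ≤ _ := by
      gcongr

end MatHelpers

section TensorHelpers
open scoped MatrixOrder
open Matrix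

variable {κ : Type*} [Fintype κ] [DecidableEq κ]

lemma bp_tensor_mul {n : ℕ} {ι : Type*} [Fintype ι] (M N : Fin n → Matrix ι ι ℂ) :
    tensorPow M * tensorPow N = tensorPow (fun k => M k * N k) := by
  ext i j
  simp only [tensorPow, Matrix.mul_apply, Matrix.of_apply, ← Finset.prod_mul_distrib]
  rw [Finset.prod_univ_sum]; simp

lemma bp_tensor_star {n : ℕ} {ι : Type*} [Fintype ι] (M : Fin n → Matrix ι ι ℂ) :
    (tensorPow M)ᴴ = tensorPow (fun k => (M k)ᴴ) := by
  ext i j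
  simp [tensorPow, Matrix.conjTranspose_apply]

lemma bp_tensor_diag {n : ℕ} {ι : Type*} [Fintype ι] [DecidableEq ι] (d : Fin n → ι → ℂ) :
    tensorPow (fun k => diagonal (d k)) = diagonal (fun i => ∏ k, d k (i k)) := by
  ext i j
  simp only [tensorPow, Matrix.of_apply, diagonal_apply]
  split_ifs with h
  · subst h; simp
  · obtain ⟨k, hk⟩ := Function.ne_iff.1 h
    exact Finset.prod_eq_zero (Finset.mem_univ k) (by simp [hk])

lemma bp_tensor_one {n : ℕ} {ι : Type*} [Fintype ι] [DecidableEq ι] :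
    tensorPow (fun _ : Fin n => (1 : Matrix ι ι ℂ)) = 1 := by
  have := bp_tensor_diag (n := n) (fun _ (_ : ι) => (1 : ℂ))
  simpa using this

/-- Spectral projection in the basis given by `T`. -/
def bpPr (T : Matrix κ κ ℂ) (S : κ → Prop) [DecidablePred S] : Matrix κ κ ℂ :=
  T * diagonal (fun i => if S i then 1 else 0) * Tᴴ

lemma bp_dd (T : Matrix κ κ ℂ) (hT : Tᴴ * T = 1) (a b : κ → ℂ) :
    (T * diagonal a * Tᴴ) * (T * diagonal b * Tᴴ) = T * diagonal (fun i => a i * b i) * Tᴴ := by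
  rw [← diagonal_mul_diagonal]
  calc _ = T * diagonal a * (Tᴴ * T) * diagonal b * Tᴴ := by simp only [mul_assoc]
    _ = _ := by rw [hT]; simp only [mul_assoc, one_mul]

lemma bp_tr_d (T : Matrix κ κ ℂ) (hT : Tᴴ * T = 1) (a : κ → ℂ) :
    (T * diagonal a * Tᴴ).trace = ∑ i, a i := by
  rw [trace_mul_comm, ← mul_assoc, hT, one_mul, trace_diagonal]

lemma bpPr_proj (T : Matrix κ κ ℂ) (hT : Tᴴ * T = 1) (S : κ → Prop) [DecidablePred S] :
    BPProj (bpPr T S) := by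
  constructor
  · rw [bpPr, conjTranspose_mul, conjTranspose_mul, conjTranspose_conjTranspose,
      diagonal_conjTranspose, mul_assoc]
    congr 3
    ext i
    simp only [Pi.star_apply]
    split_ifs <;> simp
  · rw [bpPr, bp_dd T hT]
    congr 3
    ext i; split_ifs <;> simp

lemma bpPr_tr (T : Matrix κ κ ℂ) (hT : Tᴴ * T = 1) (S : κ → Prop) [DecidablePred S] :
    (bpPr T S).trace.re = ∑ i, if S i then 1 else 0 := by
  rw [bpPr, bp_tr_d T hT, Complex.re_sum]
  refine Finset.sum_congr rfl fun i _ => ?_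
  split_ifs <;> simp

lemma bpPr_tr_compl (T : Matrix κ κ ℂ) (hT : Tᴴ * T = 1) (S : κ → Prop) [DecidablePred S]
    (d : κ → ℝ) :
    ((1 - bpPr T S) * (T * diagonal (fun i => (d i : ℂ)) * Tᴴ)).trace.re
      = ∑ i, if ¬ S i then d i else 0 := by
  rw [sub_mul, one_mul, trace_sub, bpPr, bp_dd T hT, bp_tr_d T hT, bp_tr_d T hT,
    ← Finset.sum_sub_distrib, Complex.re_sum]
  refine Finset.sum_congr rfl fun i _ => ?_
  by_cases h : S i <;> simp [h]

lemma bpPr_sandwich (T : Matrix κ κ ℂ) (hT : Tᴴ * T = 1) (hT' : T * Tᴴ = 1)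
    (S : κ → Prop) [DecidablePred S] (d : κ → ℝ) (t : ℝ) (ht : 0 ≤ t) (h : ∀ i, S i → d i ≤ t) :
    bpPr T S * (T * diagonal (fun i => (d i : ℂ)) * Tᴴ) * bpPr T S ≤ t • 1 := by
  rw [bpPr, bp_dd T hT, bp_dd T hT]
  have e : (t • 1 : Matrix κ κ ℂ) = T * diagonal (fun _ => (t : ℂ)) * Tᴴ := by
    have : (diagonal (fun _ : κ => (t : ℂ))) = t • (1 : Matrix κ κ ℂ) := by
      ext i j; by_cases hij : i = j <;> simp [hij]
    rw [this, mul_smul_comm, mul_one, smul_mul_assoc, hT']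
  rw [e]
  have h2 : diagonal (fun i => (if S i then (1:ℂ) else 0) * (d i : ℂ) * (if S i then 1 else 0))
      ≤ diagonal (fun _ : κ => (t : ℂ)) := by
    rw [Matrix.le_iff, diagonal_sub, Matrix.posSemidef_diagonal_iff]
    intro i
    by_cases hS : S i
    · simp only [hS, if_true, one_mul, mul_one, sub_nonneg]
      exact_mod_cast h i hS
    · simp only [hS, if_false, mul_zero, sub_zero]
      exact_mod_cast ht
  have := bp_conj_mono h2 Tᴴ
  simpa using this

/-- diagonalisation of a state -/
lemma bp_diag {ι : Type*} [Fintype ι] [DecidableEq ι] (ρ : Matrix ι ι ℂ) (h : IsState ρ) :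
    ∃ (U : Matrix ι ι ℂ) (l : ι → ℝ), Uᴴ * U = 1 ∧ U * Uᴴ = 1 ∧
      ρ = U * diagonal (fun i => (l i : ℂ)) * Uᴴ ∧ (∀ i, 0 ≤ l i) ∧ ∑ i, l i = 1 ∧
      vnEntropy ρ = ∑ i, l i * (- Real.logb 2 (l i)) := by
  have hH := h.1.1
  refine ⟨hH.eigenvectorUnitary, hH.eigenvalues, ?_, ?_, ?_, ?_, ?_, ?_⟩
  · exact Unitary.coe_star_mul_self _
  · exact Unitary.coe_mul_star_self _
  · exact hH.spectral_theorem
  · exact h.1.eigenvalues_nonneg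
  · have := hH.trace_eq_sum_eigenvalues
    rw [h.2] at this
    have h2 := congrArg Complex.re this
    simpa using h2.symm
  · rw [vnEntropy, dif_pos hH]; simp

lemma bp_tensor_decomp {n : ℕ} {ι : Type*} [Fintype ι] [DecidableEq ι]
    (U : Fin n → Matrix ι ι ℂ) (l : Fin n → ι → ℝ) :
    tensorPow (fun k => U k * diagonal (fun i => (l k i : ℂ)) * (U k)ᴴ) =
      tensorPow U * diagonal (fun i => ((∏ k, l k (i k) : ℝ) : ℂ)) * (tensorPow U)ᴴ := by
  have := bp_tensor_diag (fun k i => (l k i : ℂ))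
  push_cast
  rw [← this, bp_tensor_star, bp_tensor_mul, bp_tensor_mul]

lemma bp_tensor_nonneg {n : ℕ} {ι : Type*} [Fintype ι] [DecidableEq ι]
    (M : Fin n → Matrix ι ι ℂ) (hM : ∀ k, 0 ≤ M k) : 0 ≤ tensorPow M := by
  choose C hC using fun k => CStarAlgebra.nonneg_iff_eq_star_mul_self.1 (hM k)
  have : tensorPow M = (tensorPow C)ᴴ * tensorPow C := by
    rw [bp_tensor_star, bp_tensor_mul]
    congr 1; funext k; exact hC k
  rw [this]
  exact star_mul_self_nonneg _

lemma bp_logprod {n : ℕ} (l : Fin n → ℝ) (hl : ∀ k, 0 < l k) :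
    ∑ k, (- Real.logb 2 (l k)) = - Real.logb 2 (∏ k, l k) := by
  rw [Real.logb_prod _ _ fun k _ => (hl k).ne', Finset.sum_neg_distrib]

lemma bp_typical {ι : Type*} [Fintype ι] [DecidableEq ι] (ρ : Matrix ι ι ℂ) (h : IsState ρ)
    (η ε : ℝ) (hη : 0 < η) (hε : 0 < ε) :
    ∃ N : ℕ, ∀ n : ℕ, N ≤ n → ∃ R : Matrix (Fin n → ι) (Fin n → ι) ℂ, BPProj R ∧
      ((1 - R) * tensorPow (fun _ : Fin n => ρ)).trace.re ≤ ε ∧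
      R * tensorPow (fun _ : Fin n => ρ) * R ≤ ((2 : ℝ) ^ (-(n * (vnEntropy ρ - η)))) • 1 := by
  classical
  obtain ⟨U, l, hU, hU', hρ, hl0, hl1, hS⟩ := bp_diag ρ h
  obtain ⟨N, hN⟩ := bp_cheb l hl0 hl1 (fun i => - Real.logb 2 (l i)) η ε hη hε
  refine ⟨N, fun n hn => ?_⟩
  set T := tensorPow (fun _ : Fin n => U) with hT
  have hTT : Tᴴ * T = 1 := by rw [hT, bp_tensor_star, bp_tensor_mul, hU, bp_tensor_one]
  have hTT' : T * Tᴴ = 1 := by rw [hT, bp_tensor_star, bp_tensor_mul, hU', bp_tensor_one]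
  set t := (2 : ℝ) ^ (-(n * (vnEntropy ρ - η))) with ht
  have ht0 : 0 < t := by positivity
  have hd : tensorPow (fun _ : Fin n => ρ) = T * diagonal (fun i => ((∏ k, l (i k) : ℝ) : ℂ)) * Tᴴ := by
    rw [hρ]; exact bp_tensor_decomp (fun _ => U) (fun _ => l)
  refine ⟨bpPr T (fun i => ∏ k, l (i k) ≤ t), bpPr_proj T hTT _, ?_, ?_⟩
  · rw [hd, bpPr_tr_compl T hTT]
    refine hN n hn (fun i => ¬ ∏ k, l (i k) ≤ t) _ fun x hx hp => ?_
    have hpos : ∀ k, 0 < l (x k) := fun k =>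
      (hl0 _).lt_of_ne' (Finset.prod_ne_zero_iff.1 hp.ne' k (Finset.mem_univ k))
    rw [bp_logprod _ hpos, ← hS, abs_sub_comm]
    refine le_trans ?_ (le_abs_self _)
    have : -(n * (vnEntropy ρ - η)) ≤ Real.logb 2 (∏ k, l (x k)) := by
      rw [Real.le_logb_iff_rpow_le (by norm_num) hp]
      exact (not_le.1 hx).le
    linarith
  · rw [hd]
    exact bpPr_sandwich T hTT hTT' _ _ t ht0.le fun i hi => hi

lemma bp_cond_typical {A ι : Type*} [Fintype A] [Fintype ι] [DecidableEq ι]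
    (W : A → Matrix ι ι ℂ) (hW : ∀ a, IsState (W a)) (P : A → ℝ) (hP : IsDist P)
    (η ε : ℝ) (hη : 0 < η) (hε : 0 < ε) :
    ∃ N : ℕ, ∀ n : ℕ, N ≤ n → ∃ Q : (Fin n → A) → Matrix (Fin n → ι) (Fin n → ι) ℂ,
      (∀ x, BPProj (Q x)) ∧
      (∀ x, (Q x).trace.re ≤ (2 : ℝ) ^ (n * ((∑ a, P a * vnEntropy (W a)) + η))) ∧
      ∑ x : Fin n → A, (∏ k, P (x k)) * ((1 - Q x) * cqPow W n x).trace.re ≤ ε := by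
  classical
  choose U l hU hU' hρ hl0 hl1 hS using fun a => bp_diag (W a) (hW a)
  obtain ⟨N, hN⟩ := bp_cheb (fun z : A × ι => P z.1 * l z.1 z.2)
    (fun z => mul_nonneg (hP.1 _) (hl0 _ _))
    (by rw [Fintype.sum_prod_type]; simp only [← Finset.mul_sum, hl1, mul_one, hP.2])
    (fun z => - Real.logb 2 (l z.1 z.2)) η ε hη hε
  refine ⟨N, fun n hn => ?_⟩
  set H := ∑ a, P a * vnEntropy (W a) with hH
  have hmean : ∑ z : A × ι, P z.1 * l z.1 z.2 * (- Real.logb 2 (l z.1 z.2)) = H := by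
    rw [Fintype.sum_prod_type, hH]
    refine Finset.sum_congr rfl fun a _ => ?_
    rw [hS, Finset.mul_sum]
    exact Finset.sum_congr rfl fun i _ => by ring
  set T : (Fin n → A) → Matrix (Fin n → ι) (Fin n → ι) ℂ :=
    fun x => tensorPow (fun k => U (x k)) with hT
  have hTT : ∀ x, (T x)ᴴ * T x = 1 := fun x => by
    simp only [hT]
    rw [bp_tensor_star, bp_tensor_mul]; simp only [hU, bp_tensor_one]
  set t := (2 : ℝ) ^ (-(n * (H + η))) with ht
  have ht0 : 0 < t := by positivity
  have hd : ∀ x, cqPow W n x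
      = T x * diagonal (fun i => ((∏ k, l (x k) (i k) : ℝ) : ℂ)) * (T x)ᴴ := fun x => by
    rw [cqPow]
    rw [show (fun k => W (x k)) = fun k => U (x k) * diagonal (fun i => (l (x k) i : ℂ)) * (U (x k))ᴴ
      from funext fun k => hρ (x k)]
    exact bp_tensor_decomp (fun k => U (x k)) (fun k => l (x k))
  refine ⟨fun x => bpPr (T x) (fun i => t ≤ ∏ k, l (x k) (i k)), fun x => bpPr_proj _ (hTT x) _,
    fun x => ?_, ?_⟩
  · rw [bpPr_tr _ (hTT x)]
    have h1 : t * ∑ i : Fin n → ι, (if t ≤ ∏ k, l (x k) (i k) then (1:ℝ) else 0) ≤ 1 := by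
      have : ∑ i : Fin n → ι, ∏ k, l (x k) (i k) = 1 := by
        rw [bp_sum_prod (fun k => l (x k))]; simp [hl1]
      refine le_trans ?_ this.le
      rw [Finset.mul_sum]
      refine Finset.sum_le_sum fun i _ => ?_
      split_ifs with hi
      · simpa using hi
      · rw [mul_zero]; exact Finset.prod_nonneg fun k _ => hl0 _ _
    have h2 : (2 : ℝ) ^ (n * (H + η)) = t⁻¹ := by
      rw [ht, Real.rpow_neg (by norm_num), inv_inv]
    rw [h2, ← one_div, le_div_iff₀ ht0, mul_comm]
    exact h1
  · have key := hN n hn (fun z => ¬ t ≤ ∏ k, l (z k).1 (z k).2) inferInstance fun z hz hp => ?_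
    · refine le_trans (le_of_eq ?_) key
      rw [← (Equiv.arrowProdEquivProdArrow (Fin n) (fun _ => A) (fun _ => ι)).symm.sum_comp,
        Fintype.sum_prod_type]
      refine Finset.sum_congr rfl fun x _ => ?_
      rw [hd, bpPr_tr_compl _ (hTT x), Finset.mul_sum]
      refine Finset.sum_congr rfl fun i _ => ?_
      simp only [Equiv.arrowProdEquivProdArrow, Equiv.coe_fn_symm_mk, mul_ite, mul_zero,
        Finset.prod_mul_distrib]
    · have hq : ∀ k, l (z k).1 (z k).2 ≠ 0 := fun k =>
        right_ne_zero_of_mul (Finset.prod_ne_zero_iff.1 hp.ne' k (Finset.mem_univ k))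
      have hpos : ∀ k, 0 < l (z k).1 (z k).2 := fun k => (hl0 _ _).lt_of_ne' (hq k)
      rw [bp_logprod _ hpos, hmean]
      refine le_trans ?_ (le_abs_self _)
      have : Real.logb 2 (∏ k, l (z k).1 (z k).2) ≤ -(n * (H + η)) := by
        rw [Real.logb_le_iff_le_rpow (by norm_num) (Finset.prod_pos fun k _ => hpos k)]
        exact (not_le.1 hz).le
      linarith

lemma bp_avg {A ι : Type*} [Fintype A] [Fintype ι] (W : A → Matrix ι ι ℂ) (P : A → ℝ) (n : ℕ) :
    ∑ x : Fin n → A, (∏ k, P (x k)) • cqPow W n x =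
      tensorPow (fun _ : Fin n => ∑ a, (P a : ℂ) • W a) := by
  ext i j
  simp only [Matrix.sum_apply, Matrix.smul_apply, cqPow, tensorPow, Matrix.of_apply]
  rw [Finset.prod_univ_sum]
  simp [Finset.prod_mul_distrib]

lemma bp_avg_state {A ι : Type*} [Fintype A] [Fintype ι] [DecidableEq ι] (W : A → Matrix ι ι ℂ)
    (hW : ∀ a, IsState (W a)) (P : A → ℝ) (hP : IsDist P) :
    IsState (∑ a, (P a : ℂ) • W a) := by
  constructor
  · rw [← Matrix.nonneg_iff_posSemidef]
    refine Finset.sum_nonneg fun a _ => ?_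
    exact Matrix.nonneg_iff_posSemidef.2 ((hW a).1.smul (by exact_mod_cast hP.1 a))
  · rw [trace_sum]
    simp only [trace_smul, (hW _).2, smul_eq_mul, mul_one]
    exact_mod_cast hP.2

end TensorHelpers

section CodeHelpers
open scoped MatrixOrder
open Matrix

lemma bpSeq_congr {κ : Type*} [Fintype κ] [DecidableEq κ] (E E' : ℕ → Matrix κ κ ℂ) (N : ℕ)
    (h : ∀ i < N, E i = E' i) : bpSeq E N = bpSeq E' N := by
  induction N with
  | zero => rfl
  | succ N ih =>
    rw [bpSeq, bpSeq, ih fun i hi => h i (hi.trans (Nat.lt_succ_self N)), h N (Nat.lt_succ_self N)]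

lemma bpProj_zero {κ : Type*} [Fintype κ] [DecidableEq κ] : BPProj (0 : Matrix κ κ ℂ) := by
  simp [BPProj]

lemma bp_decoder {κ : Type*} [Fintype κ] [DecidableEq κ] (J : ℕ) (Q : Fin J → Matrix κ κ ℂ)
    (hQ : ∀ i, BPProj (Q i)) (R : Matrix κ κ ℂ) (hR : BPProj R) :
    ∃ D : Fin J → Matrix κ κ ℂ, IsPOVM D ∧ ∀ m, ∀ ρ : Matrix κ κ ℂ, 0 ≤ ρ →
      ((1 - D m) * ρ).trace.re ≤ 9 * ((1 - R) * ρ).trace.re + 8 * ((1 - Q m) * ρ).trace.re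
        + 4 * ∑ i, if i ≠ m then (Q i * (R * ρ * R)).trace.re else 0 := by
  classical
  set Q' : ℕ → Matrix κ κ ℂ := fun i => if h : i < J then Q ⟨i, h⟩ else 0 with hQ'
  have hQ'p : ∀ i, BPProj (Q' i) := fun i => by
    simp only [hQ']; split_ifs
    · exact hQ _
    · exact bpProj_zero
  have hQQ : ∀ m : Fin J, Q' m = Q m := fun m => by simp [hQ']
  set B := bpSeq (fun i => 1 - Q' i) with hB
  set D : Fin J → Matrix κ κ ℂ := fun m => R * ((Q m * B m)ᴴ * (Q m * B m)) * R with hD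
  refine ⟨D, ⟨fun m => ?_, ?_⟩, fun m ρ hρ => ?_⟩
  · rw [← Matrix.nonneg_iff_posSemidef]
    have := bp_conj_mono (star_mul_self_nonneg (Q m * B m)) R
    rw [hR.1] at this
    simpa [hD, star_eq_conjTranspose] using this
  · have h1 := bpSeq_tele (fun i => 1 - Q' i) (fun i => (hQ'p i).compl) J
    simp only [sub_sub_cancel] at h1
    have h2 : ∑ m, D m = R * (1 - (B J)ᴴ * B J) * R := by
      rw [h1, Finset.sum_range, Finset.mul_sum, Finset.sum_mul]
      refine Finset.sum_congr rfl fun m _ => ?_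
      simp only [hD, hQQ, hB]
    have h3 : 1 - (B J)ᴴ * B J ≤ 1 := sub_le_self _ (star_mul_self_nonneg (B J))
    have h4 := bp_conj_mono h3 R
    rw [hR.1, ← h2, mul_one, hR.2] at h4
    exact Matrix.le_iff.1 (h4.trans hR.le_one)
  · set E : ℕ → Matrix κ κ ℂ := fun i => if i < m then 1 - Q' i else Q m with hE
    have hEp : ∀ i, BPProj (E i) := fun i => by
      simp only [hE]; split_ifs
      · exact (hQ'p i).compl
      · exact hQ m
    have hU := bp_union E hEp (m + 1)
    have hEB : bpSeq E (m + 1) = Q m * B m := by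
      rw [bpSeq, bpSeq_congr E (fun i => 1 - Q' i) m (fun i hi => by simp [hE, hi])]
      simp [hE, hB]
    have hsum : ∑ i ∈ Finset.range (m + 1), (1 - E i) ≤
        (∑ i, if i ≠ m then Q i else 0) + (1 - Q m) := by
      rw [Finset.sum_range_succ]
      have e1 : (1 - E m) = 1 - Q m := by simp [hE]
      rw [e1]
      gcongr
      have e2 : ∑ i ∈ Finset.range m, (1 - E i) = ∑ i : Fin J, if i < m then Q i else 0 := by
        have : ∑ i ∈ Finset.range m, (1 - E i)
            = ∑ i ∈ Finset.range J, if i < (m : ℕ) then Q' i else 0 := by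
          rw [← Finset.sum_filter]
          refine Finset.sum_congr ?_ fun i hi => ?_
          · ext i; simp only [Finset.mem_range, Finset.mem_filter]
            have := m.2; omega
          · have : i < (m : ℕ) := by simpa using (Finset.mem_filter.1 hi).2
            simp [hE, this]
        rw [this, Finset.sum_range]
        refine Finset.sum_congr rfl fun i _ => ?_
        rw [hQQ]; rfl
      rw [e2]
      refine Finset.sum_le_sum fun i _ => ?_
      split_ifs with h1 h2 h2
      · exact le_rfl
      · exact absurd h1 (by simp [not_not.1 h2])
      · exact (hQ i).nonneg
      · exact le_rfl
    have hU2 := hU.trans (smul_le_smul_of_nonneg_left hsum (by norm_num : (0:ℝ) ≤ 4))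
    rw [hEB] at hU2
    have hU3 := bp_conj_mono hU2 R
    rw [hR.1] at hU3
    have hg := bp_gentle (hQ m) hR
    have t1 := bp_tr_mono hU3 hρ
    have t2 := bp_tr_mono hg hρ
    have e1 : (1 - D m) = (1 - R) + R * (1 - (Q m * B m)ᴴ * (Q m * B m)) * R := by
      simp only [hD, mul_sub, sub_mul, mul_one, hR.2]; abel
    have e3 : (R * ((4:ℝ) • ((∑ i, if i ≠ m then Q i else 0) + (1 - Q m))) * R * ρ).trace.re
        = 4 * (∑ i, if i ≠ m then (Q i * (R * ρ * R)).trace.re else 0)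
          + 4 * (R * (1 - Q m) * R * ρ).trace.re := by
      have c : (R * (∑ i, if i ≠ m then Q i else 0) * R * ρ).trace.re =
          ∑ i, if i ≠ m then (Q i * (R * ρ * R)).trace.re else 0 := by
        rw [Finset.mul_sum, Finset.sum_mul, Finset.sum_mul, trace_sum, Complex.re_sum]
        refine Finset.sum_congr rfl fun i _ => ?_
        split_ifs
        · rw [mul_assoc, mul_assoc, trace_mul_comm]; simp only [mul_assoc]
        · simp
      rw [mul_smul_comm, smul_mul_assoc, smul_mul_assoc, trace_smul, Complex.smul_re, mul_add,
        add_mul, add_mul, trace_add, Complex.add_re, c, smul_eq_mul]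
      ring
    rw [e3] at t1
    simp only [add_mul, smul_mul_assoc, trace_add, trace_smul, Complex.add_re, Complex.smul_re,
      smul_eq_mul] at t2
    rw [e1, add_mul, trace_add, Complex.add_re]
    linarith

lemma bp_marg1 {J Z : Type*} [Fintype J] [DecidableEq J]
    [Fintype Z] (q : Z → ℝ) (hq : ∑ z, q z = 1) (m : J) (F : Z → ℝ) :
    ∑ w : J → Z, (∏ j, q (w j)) * F (w m) = ∑ z, q z * F z := by
  rw [bp_marginal q hq (fun _ : Unit => m) (fun _ _ _ => rfl) (fun x => F (x ()))]
  rw [← (Equiv.funUnique Unit Z).symm.sum_comp]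
  simp

lemma bp_marg2 {J Z : Type*} [Fintype J] [DecidableEq J]
    [Fintype Z] (q : Z → ℝ) (hq : ∑ z, q z = 1) (i m : J) (h : i ≠ m) (F : Z → Z → ℝ) :
    ∑ w : J → Z, (∏ j, q (w j)) * F (w i) (w m) = ∑ z, q z * ∑ z', q z' * F z z' := by
  have := bp_marginal q hq (![i, m]) (by
    intro a b; fin_cases a <;> fin_cases b <;> simp [h, h.symm]) (fun x => F (x 0) (x 1))
  simp only [Matrix.cons_val_zero, Matrix.cons_val_one] at this
  rw [this, ← (finTwoArrowEquiv Z).symm.sum_comp, Fintype.sum_prod_type]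
  refine Finset.sum_congr rfl fun z _ => ?_
  rw [Finset.mul_sum]
  refine Finset.sum_congr rfl fun z' _ => ?_
  simp [Fin.prod_univ_two, mul_assoc]

lemma bp_avg_tr {A ι : Type*} [Fintype A] [Fintype ι] (W : A → Matrix ι ι ℂ) (P : A → ℝ) (n : ℕ)
    (M R R' : Matrix (Fin n → ι) (Fin n → ι) ℂ) :
    ∑ x : Fin n → A, (∏ k, P (x k)) * (M * (R * cqPow W n x * R')).trace.re =
      (M * (R * tensorPow (fun _ : Fin n => ∑ a, (P a : ℂ) • W a) * R')).trace.re := by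
  classical
  rw [← bp_avg, Finset.mul_sum, Finset.sum_mul, Finset.mul_sum, trace_sum, Complex.re_sum]
  refine Finset.sum_congr rfl fun x _ => ?_
  rw [mul_smul_comm, smul_mul_assoc, mul_smul_comm, trace_smul, Complex.smul_re, smul_eq_mul]

lemma bp_single {A ι : Type*} [Fintype A] [Fintype ι] [DecidableEq ι]
    (W : A → Matrix ι ι ℂ) (hW : ∀ a, IsState (W a)) (P : A → ℝ) (hP : IsDist P)
    (ε δ : ℝ) (hε : 0 < ε) (hδ : 0 < δ) :
    ∃ N : ℕ, ∀ n : ℕ, N ≤ n → ∃ J : ℕ, 1 ≤ J ∧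
      (∀ K : ℕ, 1 ≤ K → (J : ℝ) ≤ 2 * K → holevo P W - δ ≤ (1 / n : ℝ) * Real.logb 2 K) ∧
      ∃ D : (Fin J → Fin n → A) → Fin J → Matrix (Fin n → ι) (Fin n → ι) ℂ,
        (∀ x, IsPOVM (D x)) ∧
        ∑ x : Fin J → Fin n → A, (∏ m, ∏ k, P (x m k)) *
          ∑ m, ((1 - D x m) * cqPow W n (x m)).trace.re ≤ ε * J := by
  classical
  by_cases hχ : holevo P W ≤ δ
  · refine ⟨0, fun n _ => ⟨1, le_rfl, fun K hK _ => ?_, fun _ _ => 1, fun x => ⟨fun _ => ?_, ?_⟩, ?_⟩⟩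
    · have h1 : 0 ≤ Real.logb 2 K := Real.logb_nonneg (by norm_num) (by exact_mod_cast hK)
      have : 0 ≤ (1 / n : ℝ) * Real.logb 2 K := by positivity
      linarith
    · exact Matrix.PosSemidef.one
    · simp [loewnerLE, Matrix.PosSemidef.zero]
    · simp [hε.le]
  push Not at hχ
  set σ := ∑ a, (P a : ℂ) • W a with hσ
  have hσs : IsState σ := bp_avg_state W hW P hP
  set H := ∑ a, P a * vnEntropy (W a) with hH
  have hχd : holevo P W = vnEntropy σ - H := rfl
  set χ := holevo P W with hχ'
  obtain ⟨N1, hN1⟩ := bp_typical σ hσs (δ / 4) (ε / 36) (by positivity) (by positivity)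
  obtain ⟨N2, hN2⟩ := bp_cond_typical W hW P hP (δ / 4) (ε / 32) (by positivity) (by positivity)
  have hlim : Filter.Tendsto (fun n : ℕ => ((2 : ℝ) ^ (-(δ / 2))) ^ n) Filter.atTop (nhds 0) :=
    tendsto_pow_atTop_nhds_zero_of_lt_one (by positivity)
      (Real.rpow_lt_one_of_one_lt_of_neg (by norm_num) (by linarith))
  obtain ⟨N3, hN3⟩ := Filter.eventually_atTop.1
    (hlim.eventually (gt_mem_nhds (show (0 : ℝ) < ε / 24 by positivity)))
  refine ⟨max (max N1 N2) (max N3 1), fun n hn => ?_⟩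
  simp only [max_le_iff] at hn
  obtain ⟨⟨hn1, hn2⟩, hn3, hn4⟩ := hn
  obtain ⟨R, hR, hRα, hRt⟩ := hN1 n hn1
  obtain ⟨Q, hQ, hQt, hQβ⟩ := hN2 n hn2
  have h3 := hN3 n hn3
  have hn0 : (0 : ℝ) < n := by exact_mod_cast hn4
  set r := (2 : ℝ) ^ (n * (χ - δ)) with hr
  have hr0 : 0 < r := by positivity
  have hr1 : 1 ≤ r := Real.one_le_rpow (by norm_num) (mul_nonneg hn0.le (by linarith))
  set J := ⌈2 * r⌉₊ with hJ
  have hJ1 : 2 * r ≤ J := Nat.le_ceil _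
  have hJ2 : (J : ℝ) ≤ 3 * r := by
    have := (Nat.ceil_lt_add_one (show 0 ≤ 2 * r by positivity)).le
    linarith
  have hJpos : 1 ≤ J := by
    have : (1 : ℝ) ≤ J := by linarith
    exact_mod_cast this
  choose D hDp hD using fun x : Fin J → Fin n → A =>
    bp_decoder J (fun i => Q (x i)) (fun i => hQ _) R hR
  refine ⟨J, hJpos, fun K hK hJK => ?_, D, hDp, ?_⟩
  · have hK0 : (0 : ℝ) < K := by exact_mod_cast hK
    have h1 : n * (χ - δ) ≤ Real.logb 2 K := by
      rw [Real.le_logb_iff_rpow_le (by norm_num) hK0]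
      linarith
    rw [one_div, inv_mul_eq_div, le_div_iff₀ hn0]
    linarith
  set q : (Fin n → A) → ℝ := fun y => ∏ k, P (y k) with hq
  have hq0 : ∀ y, 0 ≤ q y := fun y => Finset.prod_nonneg fun k _ => hP.1 _
  have hq1 : ∑ y, q y = 1 := bp_sum_prod_one P hP.2
  have hWn : ∀ y, 0 ≤ cqPow W n y := fun y =>
    bp_tensor_nonneg _ fun k => Matrix.nonneg_iff_posSemidef.2 (hW _).1
  have hα : ∑ y, q y * ((1 - R) * cqPow W n y).trace.re ≤ ε / 36 := by
    have := bp_avg_tr W P n (1 - R) 1 1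
    simp only [one_mul, mul_one] at this
    rw [this]; exact hRα
  have hγ : ∑ y, q y * ∑ y', q y' * (Q y * (R * cqPow W n y' * R)).trace.re
      ≤ (2 : ℝ) ^ (-(n * (χ - δ / 2))) := by
    have h1 : ∀ y, ∑ y', q y' * (Q y * (R * cqPow W n y' * R)).trace.re
        ≤ (2 : ℝ) ^ (-(n * (χ - δ / 2))) := fun y => by
      rw [bp_avg_tr W P n (Q y) R R]
      refine (bp_tr_mono' hRt (hQ y).nonneg).trans ?_
      rw [mul_smul_comm, mul_one, trace_smul, Complex.smul_re, smul_eq_mul]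
      refine (mul_le_mul_of_nonneg_left (hQt y) (by positivity)).trans (le_of_eq ?_)
      rw [← Real.rpow_add (by norm_num)]
      congr 1
      rw [hχd]; ring
    calc _ ≤ ∑ y, q y * (2 : ℝ) ^ (-(n * (χ - δ / 2))) :=
          Finset.sum_le_sum fun y _ => mul_le_mul_of_nonneg_left (h1 y) (hq0 y)
      _ = _ := by rw [← Finset.sum_mul, hq1, one_mul]
  set γ := (2 : ℝ) ^ (-(n * (χ - δ / 2))) with hγd
  have hγ0 : 0 ≤ γ := by positivity
  have hJγ : J * γ ≤ ε / 8 := by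
    have e : r * γ = ((2 : ℝ) ^ (-(δ / 2))) ^ n := by
      rw [hr, hγd, ← Real.rpow_add (by norm_num), ← Real.rpow_natCast, ← Real.rpow_mul (by norm_num)]
      congr 1; ring
    have := mul_le_mul_of_nonneg_right hJ2 hγ0
    rw [mul_assoc, e] at this
    linarith
  have per : ∀ m : Fin J, ∑ x : Fin J → Fin n → A, (∏ j, q (x j)) *
      ((1 - D x m) * cqPow W n (x m)).trace.re ≤ ε := by
    intro m
    have b : ∑ x : Fin J → Fin n → A, (∏ j, q (x j)) * ((1 - D x m) * cqPow W n (x m)).trace.re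
      ≤ 9 * ∑ x : Fin J → Fin n → A, (∏ j, q (x j)) * ((1 - R) * cqPow W n (x m)).trace.re
        + 8 * ∑ x : Fin J → Fin n → A, (∏ j, q (x j)) * ((1 - Q (x m)) * cqPow W n (x m)).trace.re
        + 4 * ∑ i, ∑ x : Fin J → Fin n → A, (∏ j, q (x j)) *
          (if i ≠ m then (Q (x i) * (R * cqPow W n (x m) * R)).trace.re else 0) := by
      rw [Finset.sum_comm (s := (Finset.univ : Finset (Fin J)))]
      simp only [Finset.mul_sum, ← Finset.sum_add_distrib]
      refine Finset.sum_le_sum fun x _ => ?_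
      have hp : 0 ≤ ∏ j, q (x j) := Finset.prod_nonneg fun j _ => hq0 _
      refine (mul_le_mul_of_nonneg_left (hD x m _ (hWn (x m))) hp).trans (le_of_eq ?_)
      rw [mul_add, mul_add, Finset.mul_sum, Finset.mul_sum]
      congr 1
      · ring
      · exact Finset.sum_congr rfl fun i _ => by ring
    rw [bp_marg1 q hq1 m (fun y => ((1 - R) * cqPow W n y).trace.re),
      bp_marg1 q hq1 m (fun y => ((1 - Q y) * cqPow W n y).trace.re)] at b
    have c : ∑ i, ∑ x : Fin J → Fin n → A, (∏ j, q (x j)) *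
          (if i ≠ m then (Q (x i) * (R * cqPow W n (x m) * R)).trace.re else 0) ≤ J * γ := by
      calc _ ≤ ∑ _i : Fin J, γ := by
            refine Finset.sum_le_sum fun i _ => ?_
            split_ifs with h
            · rw [bp_marg2 q hq1 i m h (fun y y' => (Q y * (R * cqPow W n y' * R)).trace.re)]
              exact hγ
            · simpa using hγ0
        _ = _ := by simp
    linarith
  calc _ = ∑ m : Fin J, ∑ x : Fin J → Fin n → A, (∏ j, q (x j)) *
      ((1 - D x m) * cqPow W n (x m)).trace.re := by
        rw [Finset.sum_comm]; simp only [Finset.mul_sum, hq]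
    _ ≤ ∑ _m : Fin J, ε := Finset.sum_le_sum fun m _ => per m
    _ = ε * J := by simp [mul_comm]

lemma bp_good (J : ℕ) (e : Fin J → ℝ) (he : ∀ i, 0 ≤ e i) (η : ℝ) (hη : 0 < η)
    (h : ∑ i, e i ≤ η * J) :
    ∃ G : Finset (Fin J), (J : ℝ) ≤ 2 * G.card ∧ ∀ i ∈ G, e i ≤ 2 * η := by
  classical
  refine ⟨Finset.univ.filter fun i => e i ≤ 2 * η, ?_, fun i hi => (Finset.mem_filter.1 hi).2⟩
  have h1 : ∑ i : Fin J, (2 * η - if e i ≤ 2 * η then 2 * η else 0) ≤ ∑ i, e i := by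
    refine Finset.sum_le_sum fun i _ => ?_
    have := he i
    split_ifs with h <;> linarith
  rw [Finset.sum_sub_distrib, ← Finset.sum_filter] at h1
  simp only [Finset.sum_const, Finset.card_univ, Fintype.card_fin, nsmul_eq_mul] at h1
  nlinarith

end CodeHelpers

section MainHelpers
open scoped MatrixOrder
open Matrix

lemma bp_sub {M I J : Type*} [AddCommMonoid M] [PartialOrder M] [IsOrderedAddMonoid M] [Fintype I]
    [Fintype J] (o : I ↪ J) (f : J → M) (hf : ∀ j, 0 ≤ f j) : ∑ a, f (o a) ≤ ∑ j, f j := by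
  rw [← Finset.sum_map Finset.univ o f]
  exact Finset.sum_le_univ_sum_of_nonneg hf

lemma bp_povm_sub {κ I J : Type*} [Fintype κ] [DecidableEq κ] [Fintype I] [Fintype J]
    (o : I ↪ J) (D : J → Matrix κ κ ℂ) (hD : IsPOVM D) : IsPOVM (fun a => D (o a)) := by
  refine ⟨fun a => hD.1 _, ?_⟩
  have h1 := bp_sub o D fun j => Matrix.nonneg_iff_posSemidef.2 (hD.1 j)
  exact Matrix.le_iff.1 (h1.trans (Matrix.le_iff.2 hD.2))

lemma bp_err_nonneg {κ J : Type*} [Fintype κ] [DecidableEq κ] [Fintype J]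
    (D : J → Matrix κ κ ℂ) (hD : IsPOVM D) (j : J) (ρ : Matrix κ κ ℂ) (hρ : 0 ≤ ρ) :
    0 ≤ ((1 - D j) * ρ).trace.re := by
  refine bp_tr_nonneg (sub_nonneg.2 ?_) hρ
  have h1 : D j ≤ ∑ j, D j := Finset.single_le_sum
    (fun j _ => Matrix.nonneg_iff_posSemidef.2 (hD.1 j)) (Finset.mem_univ j)
  exact h1.trans (Matrix.le_iff.2 hD.2)

lemma bp_exists {Ω : Type*} [Fintype Ω] (p : Ω → ℝ) (hp0 : ∀ w, 0 ≤ p w) (hp : ∑ w, p w = 1)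
    (f : Ω → ℝ) (c : ℝ) (h : ∑ w, p w * f w ≤ c) : ∃ w, f w ≤ c := by
  by_contra hc
  push Not at hc
  have h1 : ∑ w, p w * (f w - c) ≤ 0 := by
    simp only [mul_sub, Finset.sum_sub_distrib, ← Finset.sum_mul, hp]; linarith
  have h2 : ∀ w ∈ Finset.univ, 0 ≤ p w * (f w - c) := fun w _ =>
    mul_nonneg (hp0 w) (by linarith [hc w])
  have h3 := (Finset.sum_eq_zero_iff_of_nonneg h2).1 (le_antisymm h1 (Finset.sum_nonneg h2))
  have h4 : ∀ w, p w = 0 := fun w => by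
    rcases mul_eq_zero.1 (h3 w (Finset.mem_univ w)) with h | h
    · exact h
    · linarith [hc w]
  simp [h4] at hp

lemma bp_final (J K : ℕ) (hK : 1 ≤ K) (hJK : (J : ℝ) ≤ 2 * K) (o : Fin K ↪ Fin J) (f : Fin J → ℝ)
    (hf : ∀ j, 0 ≤ f j) (ε : ℝ) (hε : 0 < ε) (h : ∑ j, f j ≤ 2 * (ε / 4 * J)) :
    ((K : ℝ))⁻¹ * ∑ a, f (o a) ≤ ε := by
  have hK0 : (0 : ℝ) < K := by exact_mod_cast hK
  have := bp_sub o f hf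
  rw [inv_mul_eq_div, div_le_iff₀ hK0]
  nlinarith

end MainHelpers


/-- Achievability part of the broadcast-phase capacity theorem. -/
theorem broadcast_phase_achievability
    {A ι₁ ι₂ : Type*} [Fintype A] [Fintype ι₁] [DecidableEq ι₁] [Fintype ι₂] [DecidableEq ι₂]
    (W1 : A → Matrix ι₁ ι₁ ℂ) (W2 : A → Matrix ι₂ ι₂ ℂ)
    (hW1 : ∀ a, IsState (W1 a)) (hW2 : ∀ a, IsState (W2 a))
    (P : A → ℝ) (hP : IsDist P)
    (ε δ : ℝ) (hε : 0 < ε) (hδ : 0 < δ) :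
    ∃ N : ℕ, ∀ n : ℕ, N ≤ n →
      ∃ J1 J2 : ℕ, 1 ≤ J1 ∧ 1 ≤ J2 ∧
        holevo P W1 - δ ≤ (1 / n : ℝ) * Real.logb 2 J1 ∧
        holevo P W2 - δ ≤ (1 / n : ℝ) * Real.logb 2 J2 ∧
        BroadcastCodeExists W1 W2 n J1 J2 ε ε := by
  classical
  obtain ⟨N1, hN1⟩ := bp_single W1 hW1 P hP (ε / 8) δ (by positivity) hδ
  obtain ⟨N2, hN2⟩ := bp_single W2 hW2 P hP (ε / 8) δ (by positivity) hδ
  refine ⟨max N1 N2, fun n hn => ?_⟩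
  obtain ⟨J1, hJ1, hr1, F1, hF1, he1⟩ := hN1 n ((le_max_left _ _).trans hn)
  obtain ⟨J2, hJ2, hr2, F2, hF2, he2⟩ := hN2 n ((le_max_right _ _).trans hn)
  set q : (Fin n → A) → ℝ := fun y => ∏ k, P (y k) with hq
  have hq0 : ∀ y, 0 ≤ q y := fun y => Finset.prod_nonneg fun k _ => hP.1 _
  have hq1 : ∑ y, q y = 1 := bp_sum_prod_one P hP.2
  set g1 : (Fin J1 → Fin n → A) → Fin J1 → ℝ :=
    fun x m => ((1 - F1 x m) * cqPow W1 n (x m)).trace.re with hg1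
  set g2 : (Fin J2 → Fin n → A) → Fin J2 → ℝ :=
    fun x m => ((1 - F2 x m) * cqPow W2 n (x m)).trace.re with hg2
  have hg1n : ∀ x m, 0 ≤ g1 x m := fun x m => bp_err_nonneg _ (hF1 x) m _
    (bp_tensor_nonneg _ fun k => Matrix.nonneg_iff_posSemidef.2 (hW1 _).1)
  have hg2n : ∀ x m, 0 ≤ g2 x m := fun x m => bp_err_nonneg _ (hF2 x) m _
    (bp_tensor_nonneg _ fun k => Matrix.nonneg_iff_posSemidef.2 (hW2 _).1)
  have hJ1' : (1 : ℝ) ≤ J1 := by exact_mod_cast hJ1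
  have hJ2' : (1 : ℝ) ≤ J2 := by exact_mod_cast hJ2
  obtain ⟨w, hw⟩ := bp_exists (fun w : Fin J1 × Fin J2 → Fin n → A => ∏ j, q (w j))
    (fun w => Finset.prod_nonneg fun j _ => hq0 _) (bp_sum_prod_one q hq1)
    (fun w => (∑ m2, ∑ m1, g1 (fun i => w (i, m2)) m1) + ∑ m1, ∑ m2, g2 (fun i => w (m1, i)) m2)
    (ε / 4 * J1 * J2) (by
      simp only [mul_add, Finset.sum_add_distrib]
      have a1 : ∑ w : Fin J1 × Fin J2 → Fin n → A, (∏ j, q (w j)) *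
          ∑ m2, ∑ m1, g1 (fun i => w (i, m2)) m1 ≤ ∑ _m2 : Fin J2, ε / 8 * J1 := by
        simp only [Finset.mul_sum (s := (Finset.univ : Finset (Fin J2)))]
        rw [Finset.sum_comm]
        refine Finset.sum_le_sum fun m2 _ => ?_
        rw [bp_marginal q hq1 (fun i : Fin J1 => (i, m2)) (fun i j h => (Prod.ext_iff.1 h).1)
          (fun x => ∑ m1, g1 x m1)]
        exact he1
      have a2 : ∑ w : Fin J1 × Fin J2 → Fin n → A, (∏ j, q (w j)) *
          ∑ m1, ∑ m2, g2 (fun i => w (m1, i)) m2 ≤ ∑ _m1 : Fin J1, ε / 8 * J2 := by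
        simp only [Finset.mul_sum (s := (Finset.univ : Finset (Fin J1)))]
        rw [Finset.sum_comm]
        refine Finset.sum_le_sum fun m1 _ => ?_
        rw [bp_marginal q hq1 (fun i : Fin J2 => (m1, i)) (fun i j h => (Prod.ext_iff.1 h).2)
          (fun x => ∑ m2, g2 x m2)]
        exact he2
      simp only [Finset.sum_const, Finset.card_univ, Fintype.card_fin, nsmul_eq_mul] at a1 a2
      linarith)
  have n1 : ∀ m2, 0 ≤ ∑ m1, g1 (fun i => w (i, m2)) m1 := fun m2 =>
    Finset.sum_nonneg fun m1 _ => hg1n _ _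
  have n2 : ∀ m1, 0 ≤ ∑ m2, g2 (fun i => w (m1, i)) m2 := fun m1 =>
    Finset.sum_nonneg fun m2 _ => hg2n _ _
  have s1 := Finset.sum_nonneg fun m2 (_ : m2 ∈ Finset.univ) => n1 m2
  have s2 := Finset.sum_nonneg fun m1 (_ : m1 ∈ Finset.univ) => n2 m1
  obtain ⟨G2, hG2, hG2e⟩ := bp_good J2 _ n1 (ε / 4 * J1) (by positivity) (by linarith)
  obtain ⟨G1, hG1, hG1e⟩ := bp_good J1 _ n2 (ε / 4 * J2) (by positivity) (by linarith)
  have hK1 : 1 ≤ G1.card := by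
    by_contra h
    have : G1.card = 0 := by omega
    rw [this] at hG1; norm_num at hG1; linarith
  have hK2 : 1 ≤ G2.card := by
    by_contra h
    have : G2.card = 0 := by omega
    rw [this] at hG2; norm_num at hG2; linarith
  let o1 : Fin G1.card ↪ Fin J1 := (G1.orderEmbOfFin rfl).toEmbedding
  let o2 : Fin G2.card ↪ Fin J2 := (G2.orderEmbOfFin rfl).toEmbedding
  have ho1 : ∀ a, o1 a ∈ G1 := fun a => G1.orderEmbOfFin_mem rfl a
  have ho2 : ∀ a, o2 a ∈ G2 := fun a => G2.orderEmbOfFin_mem rfl a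
  refine ⟨G1.card, G2.card, hK1, hK2, hr1 _ hK1 hG1, hr2 _ hK2 hG2,
    fun m => w (o1 m.1, o2 m.2), fun b a => F1 (fun i => w (i, o2 b)) (o1 a),
    fun a b => F2 (fun i => w (o1 a, i)) (o2 b), fun b => bp_povm_sub o1 _ (hF1 _),
    fun a => bp_povm_sub o2 _ (hF2 _), fun b => ?_, fun a => ?_⟩
  · exact bp_final J1 G1.card hK1 hG1 o1 (g1 (fun i => w (i, o2 b))) (hg1n _) ε hε (hG2e _ (ho2 b))
  · exact bp_final J2 G2.card hK2 hG2 o2 (g2 (fun i => w (o1 a, i))) (hg2n _) ε hε (hG1e _ (ho1 a))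
end

section
/- Converse part of the broadcast-phase capacity theorem: Let W₁ : A → S(H₁) and W₂ : A → S(H₂) be classical-quantum channels with a common finite input alphabet A. Suppose the pair of nonnegative reals (R₁, R₂) is achievable, i.e., for every ε > 0 and δ > 0 and all sufficiently large n there exists an (n, J₁, J₂) bidirectional broadcast code with (1/n)·log₂ J₁ ≥ R₁ − δ, (1/n)·log₂ J₂ ≥ R₂ − δ, and average errors e₁ ≤ ε and e₂ ≤ ε. Then R₁ ≤ limsup_{n→∞} (1/n)·max_{P⁽ⁿ⁾} χ(P⁽ⁿ⁾; W₁^{⊗n}) and R₂ ≤ limsup_{n→∞} (1/n)·max_{P⁽ⁿ⁾} χ(P⁽ⁿ⁾; W₂^{⊗n}), where the maxima range over probability distributions P⁽ⁿ⁾ on Aⁿ and W_i^{⊗n} is regarded as a cq channel with input alphabet Aⁿ. -/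
open scoped BigOperators ComplexOrder

open Matrix MatrixOrder in
lemma bpc_factor {ι : Type*} [Fintype ι] [DecidableEq ι] {A : Matrix ι ι ℂ}
    (hA : A.PosSemidef) : ∃ B : Matrix ι ι ℂ, A = Bᴴ * B :=
  CStarAlgebra.nonneg_iff_eq_star_mul_self.mp hA.nonneg

open Matrix in
lemma bpc_trace_mul_nonneg {ι : Type*} [Fintype ι] [DecidableEq ι] {A B : Matrix ι ι ℂ}
    (hA : A.PosSemidef) (hB : B.PosSemidef) : 0 ≤ (A * B).trace.re := by
  obtain ⟨C, rfl⟩ := bpc_factor hA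
  have h := (hB.mul_mul_conjTranspose_same C).trace_nonneg
  rw [Matrix.mul_assoc, Matrix.trace_mul_comm, ]
  exact (Complex.le_def.mp h).1

open Matrix in
lemma bpc_sq_le {ι : Type*} [Fintype ι] [DecidableEq ι] {S T : Matrix ι ι ℂ}
    (hS : S.PosSemidef) (hT : T.PosSemidef) (hT1 : (1 - T).PosSemidef) :
    (S * (T * T)).trace.re ≤ (S * T).trace.re := by
  have h1 := hT1.mul_mul_conjTranspose_same T
  have h2 := hT.mul_mul_conjTranspose_same (1 - T)
  rw [hT.1.eq] at h1
  rw [hT1.1.eq] at h2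
  have h3 := bpc_trace_mul_nonneg hS (h1.add h2)
  have e : T * (1 - T) * T + (1 - T) * T * (1 - T) = T - T * T := by noncomm_ring
  rw [e, Matrix.mul_sub, Matrix.trace_sub, Complex.sub_re] at h3
  linarith

/-- overlap weights -/
noncomputable def bpcC {ι : Type*} [Fintype ι] [DecidableEq ι] {ρ σ : Matrix ι ι ℂ}
    (hρ : ρ.IsHermitian) (hσ : σ.IsHermitian) : Matrix ι ι ℂ :=
  star (hσ.eigenvectorUnitary : Matrix ι ι ℂ) * (hρ.eigenvectorUnitary : Matrix ι ι ℂ)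

lemma bpc_unit_rows {ι : Type*} [Fintype ι] [DecidableEq ι] {C : Matrix ι ι ℂ}
    (h : C * star C = 1) (j : ι) : ∑ i, Complex.normSq (C j i) = 1 := by
  have := congrFun (congrFun h j) j
  simp only [Matrix.mul_apply, Matrix.star_apply, Matrix.one_apply_eq] at this
  have h2 := congrArg Complex.re this
  simpa [Complex.normSq_apply] using h2

lemma bpc_unit_cols {ι : Type*} [Fintype ι] [DecidableEq ι] {C : Matrix ι ι ℂ}
    (h : star C * C = 1) (i : ι) : ∑ j, Complex.normSq (C j i) = 1 := by
  have := congrFun (congrFun h i) i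
  simp only [Matrix.mul_apply, Matrix.star_apply, Matrix.one_apply_eq] at this
  have h2 := congrArg Complex.re this
  simpa [Complex.normSq_apply] using h2

lemma bpcC_mul_star {ι : Type*} [Fintype ι] [DecidableEq ι] {ρ σ : Matrix ι ι ℂ}
    (hρ : ρ.IsHermitian) (hσ : σ.IsHermitian) : bpcC hρ hσ * star (bpcC hρ hσ) = 1 := by
  have h1 : (hρ.eigenvectorUnitary : Matrix ι ι ℂ) * star (hρ.eigenvectorUnitary : Matrix ι ι ℂ) = 1 :=
    Unitary.coe_mul_star_self hρ.eigenvectorUnitary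
  have h2 := Unitary.coe_star_mul_self hσ.eigenvectorUnitary
  unfold bpcC
  rw [star_mul, star_star, Matrix.mul_assoc, ← Matrix.mul_assoc _ (star _) _, h1, Matrix.one_mul, h2]

lemma bpcC_star_mul {ι : Type*} [Fintype ι] [DecidableEq ι] {ρ σ : Matrix ι ι ℂ}
    (hρ : ρ.IsHermitian) (hσ : σ.IsHermitian) : star (bpcC hρ hσ) * bpcC hρ hσ = 1 :=
  mul_eq_one_comm.mp (bpcC_mul_star hρ hσ)

lemma bpc_spec {ι : Type*} [Fintype ι] [DecidableEq ι] {ρ : Matrix ι ι ℂ}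
    (hρ : ρ.IsHermitian) : ρ = (hρ.eigenvectorUnitary : Matrix ι ι ℂ) *
      Matrix.diagonal (fun i => (hρ.eigenvalues i : ℂ)) * star (hρ.eigenvectorUnitary : Matrix ι ι ℂ) := by
  conv_lhs => rw [hρ.spectral_theorem, Unitary.conjStarAlgAut_apply]
  rfl

/-- diagonal of `ρ` in the eigenbasis of `σ` -/
lemma bpc_diag {ι : Type*} [Fintype ι] [DecidableEq ι] {ρ σ : Matrix ι ι ℂ}
    (hρ : ρ.IsHermitian) (hσ : σ.IsHermitian) (j : ι) :
    ((star (hσ.eigenvectorUnitary : Matrix ι ι ℂ) * ρ * (hσ.eigenvectorUnitary : Matrix ι ι ℂ)) j j).re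
      = ∑ i, Complex.normSq (bpcC hρ hσ j i) * hρ.eigenvalues i := by
  have e : star (hσ.eigenvectorUnitary : Matrix ι ι ℂ) * ρ * (hσ.eigenvectorUnitary : Matrix ι ι ℂ)
      = bpcC hρ hσ * Matrix.diagonal (fun i => (hρ.eigenvalues i : ℂ)) * star (bpcC hρ hσ) := by
    conv_lhs => rw [bpc_spec hρ]
    unfold bpcC
    rw [star_mul, star_star]
    simp only [Matrix.mul_assoc]
  rw [e, Matrix.mul_apply, Complex.re_sum]
  refine Finset.sum_congr rfl fun i _ => ?_
  simp [Matrix.mul_diagonal, Matrix.star_apply, Complex.normSq_apply]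
  ring

lemma bpc_diag_self {ι : Type*} [Fintype ι] [DecidableEq ι] {σ : Matrix ι ι ℂ}
    (hσ : σ.IsHermitian) (j : ι) :
    ((star (hσ.eigenvectorUnitary : Matrix ι ι ℂ) * σ * (hσ.eigenvectorUnitary : Matrix ι ι ℂ)) j j).re
      = hσ.eigenvalues j := by
  have h2 := Unitary.coe_star_mul_self hσ.eigenvectorUnitary
  have h3 := bpc_spec hσ
  set V := (hσ.eigenvectorUnitary : Matrix ι ι ℂ)
  set d := Matrix.diagonal (fun i => (hσ.eigenvalues i : ℂ)) with hd
  have e : star V * σ * V = d := by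
    calc _ = star V * (V * d * star V) * V := by rw [← h3]
      _ = (star V * V) * d * (star V * V) := by simp only [Matrix.mul_assoc]
      _ = _ := by rw [h2]; simp
  rw [e, hd]; simp

lemma bpc_pt (p q s : ℝ) (c y : ℂ) (hp : 0 ≤ p) (hq : 0 ≤ q) (hs : 0 ≤ s)
    (hsup : q = 0 → Complex.normSq c * p = 0) :
    2 * (p * (star c * y).re) - (q + s * p) * Complex.normSq y
      ≤ Complex.normSq c * p * (p / (q + s * p)) := by
  have hny := Complex.normSq_nonneg y
  rcases hq.eq_or_lt with h0 | h0
  · have h1 := hsup h0.symm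
    rw [h1]
    have : p * (star c * y).re = 0 := by
      rcases mul_eq_zero.mp h1 with h | h
      · rw [Complex.normSq_eq_zero.mp h]; simp
      · rw [h]; simp
    rw [this]
    have : 0 ≤ (q + s * p) * Complex.normSq y := by positivity
    linarith
  · have hd : 0 < q + s * p := by positivity
    rw [← mul_div_assoc, le_div_iff₀ hd]
    simp only [Complex.normSq_apply, Complex.star_def, Complex.mul_re, Complex.conj_re, Complex.conj_im]
    nlinarith [sq_nonneg (p * c.re - (q + s * p) * y.re), sq_nonneg (p * c.im - (q + s * p) * y.im)]

lemma bpc_core {ι : Type*} [Fintype ι] [DecidableEq ι] {ρ σ T : Matrix ι ι ℂ}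
    (hρ : ρ.PosSemidef) (hσ : σ.PosSemidef) (hT : T.PosSemidef) (hT1 : (1 - T).PosSemidef)
    (hsup : ∀ i j, hσ.1.eigenvalues j = 0 →
      Complex.normSq (bpcC hρ.1 hσ.1 j i) * hρ.1.eigenvalues i = 0)
    (s x : ℝ) (hs : 0 ≤ s) :
    2 * x * (ρ * T).trace.re - x ^ 2 * ((σ * T).trace.re + s * (ρ * T).trace.re) ≤
      ∑ j, ∑ i, Complex.normSq (bpcC hρ.1 hσ.1 j i) * hρ.1.eigenvalues i *
        (hρ.1.eigenvalues i / (hσ.1.eigenvalues j + s * hρ.1.eigenvalues i)) := by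
  set U := (hρ.1.eigenvectorUnitary : Matrix ι ι ℂ) with hU
  set V := (hσ.1.eigenvectorUnitary : Matrix ι ι ℂ) with hV
  set C := bpcC hρ.1 hσ.1 with hC
  set p := hρ.1.eigenvalues with hp
  set q := hσ.1.eigenvalues with hq
  have hCd : C = star V * U := rfl
  have hVV : V * star V = 1 := Unitary.coe_mul_star_self hσ.1.eigenvectorUnitary
  have hUU : U * star U = 1 := Unitary.coe_mul_star_self hρ.1.eigenvectorUnitary
  set Y := star V * T * U with hY
  have hTs : star T = T := hT.1.eq
  have hYs : star Y = star U * T * V := by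
    rw [hY, star_mul, star_mul, star_star, hTs, Matrix.mul_assoc]
  have hρs : ρ = U * Matrix.diagonal (fun i => (p i : ℂ)) * star U := bpc_spec hρ.1
  have hσs : σ = V * Matrix.diagonal (fun i => (q i : ℂ)) * star V := bpc_spec hσ.1
  have t1 : (ρ * T).trace.re = ∑ j, ∑ i, p i * (star (C j i) * Y j i).re := by
    have : (ρ * T).trace = (Matrix.diagonal (fun i => (p i : ℂ)) * (star C * Y)).trace := by
      have e : star C * Y = star U * T * U := by
        rw [hCd, hY, star_mul, star_star]
        calc _ = star U * (V * star V) * T * U := by simp only [Matrix.mul_assoc]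
          _ = _ := by rw [hVV]; simp
      rw [e, hρs, Matrix.mul_assoc, Matrix.mul_assoc, Matrix.trace_mul_comm]
      simp only [Matrix.mul_assoc]
    rw [this, Finset.sum_comm]
    simp only [Matrix.trace, Matrix.diag_apply, Matrix.diagonal_mul, Complex.re_sum]
    refine Finset.sum_congr rfl fun i _ => ?_
    rw [Complex.re_ofReal_mul, Matrix.mul_apply, Complex.re_sum, Finset.mul_sum]
    rfl
  have t2 : (σ * (T * T)).trace.re = ∑ j, ∑ i, q j * Complex.normSq (Y j i) := by
    have : (σ * (T * T)).trace = (Matrix.diagonal (fun i => (q i : ℂ)) * (Y * star Y)).trace := by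
      have e : Y * star Y = star V * (T * T) * V := by
        rw [hYs, hY]
        calc _ = star V * T * (U * star U) * T * V := by simp only [Matrix.mul_assoc]
          _ = _ := by rw [hUU]; simp [Matrix.mul_assoc]
      rw [e, hσs, Matrix.mul_assoc, Matrix.mul_assoc, Matrix.trace_mul_comm]
      simp only [Matrix.mul_assoc]
    rw [this]
    simp only [Matrix.trace, Matrix.diag_apply, Matrix.diagonal_mul, Complex.re_sum]
    refine Finset.sum_congr rfl fun i _ => ?_
    rw [Complex.re_ofReal_mul, Matrix.mul_apply, Complex.re_sum, Finset.mul_sum]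
    refine Finset.sum_congr rfl fun j _ => ?_
    simp [Matrix.star_apply, Complex.normSq_apply]
  have t3 : (ρ * (T * T)).trace.re = ∑ j, ∑ i, p i * Complex.normSq (Y j i) := by
    have : (ρ * (T * T)).trace = (Matrix.diagonal (fun i => (p i : ℂ)) * (star Y * Y)).trace := by
      have e : star Y * Y = star U * (T * T) * U := by
        rw [hYs, hY]
        calc _ = star U * T * (V * star V) * T * U := by simp only [Matrix.mul_assoc]
          _ = _ := by rw [hVV]; simp [Matrix.mul_assoc]
      rw [e, hρs, Matrix.mul_assoc, Matrix.mul_assoc, Matrix.trace_mul_comm]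
      simp only [Matrix.mul_assoc]
    rw [this, Finset.sum_comm]
    simp only [Matrix.trace, Matrix.diag_apply, Matrix.diagonal_mul, Complex.re_sum]
    refine Finset.sum_congr rfl fun i _ => ?_
    rw [Complex.re_ofReal_mul, Matrix.mul_apply, Complex.re_sum, Finset.mul_sum]
    refine Finset.sum_congr rfl fun j _ => ?_
    simp [Matrix.star_apply, Complex.normSq_apply]
  have u1 := bpc_sq_le hσ hT hT1
  have u2 := bpc_sq_le hρ hT hT1
  have key : 2 * x * (ρ * T).trace.re - x ^ 2 * ((σ * (T * T)).trace.re + s * (ρ * (T * T)).trace.re)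
      ≤ ∑ j, ∑ i, Complex.normSq (C j i) * p i * (p i / (q j + s * p i)) := by
    rw [t1, t2, t3]
    simp only [Finset.mul_sum, ← Finset.sum_add_distrib, ← Finset.sum_sub_distrib]
    refine Finset.sum_le_sum fun j _ => Finset.sum_le_sum fun i _ => ?_
    have := bpc_pt (p i) (q j) s (C j i) (x * Y j i) (hρ.eigenvalues_nonneg i)
      (hσ.eigenvalues_nonneg j) hs (hsup i j)
    refine le_trans (le_of_eq ?_) this
    have e : (star (C j i) * (x * Y j i)).re = x * (star (C j i) * Y j i).re := by
      rw [← Complex.re_ofReal_mul]; congr 1; ring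
    rw [e, Complex.normSq_mul, Complex.normSq_ofReal]
    ring
  refine le_trans ?_ key
  have : x ^ 2 * ((σ * (T * T)).trace.re + s * (ρ * (T * T)).trace.re) ≤
      x ^ 2 * ((σ * T).trace.re + s * (ρ * T).trace.re) := by gcongr
  linarith

lemma bpc_scalar {ι : Type*} [Fintype ι] (w : ι → ι → ℝ) (p q : ι → ℝ) (a β : ℝ)
    (hw : ∀ j i, 0 ≤ w j i) (hp : ∀ i, 0 ≤ p i) (hq : ∀ j, 0 ≤ q j) (ha : 0 ≤ a) (hβ : 0 < β)
    (hsup : ∀ i j, q j = 0 → w j i * p i = 0)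
    (hwq : ∑ j, ∑ i, w j i * q j ≤ 1)
    (hQ : ∀ s x : ℝ, 0 ≤ s →
      2 * x * a - x ^ 2 * (β + s * a) ≤ ∑ j, ∑ i, w j i * p i * (p i / (q j + s * p i))) :
    a * (Real.log (β + a) - Real.log β) ≤
      ∑ j, ∑ i, w j i * p i * (Real.log (p i) - Real.log (q j)) + 1 := by
  let F : ℝ → ℝ := fun s => ∑ j, ∑ i, w j i * p i * Real.log (q j + s * p i) - a * Real.log (β + s * a)
  have hF : ∀ s : ℝ, 0 ≤ s → HasDerivAt F
      (∑ j, ∑ i, w j i * p i * (p i / (q j + s * p i)) - a * (a / (β + s * a))) s := by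
    intro s hs
    have lin : ∀ c d : ℝ, HasDerivAt (fun t : ℝ => c + t * d) d s := by
      intro c d
      simpa using ((hasDerivAt_id s).mul_const d).const_add c
    refine HasDerivAt.sub ?_ ?_
    · refine HasDerivAt.fun_sum fun j _ => HasDerivAt.fun_sum fun i _ => ?_
      by_cases h : w j i * p i = 0
      · simp only [h, zero_mul]; exact hasDerivAt_const _ _
      · have hq0 : 0 < q j := lt_of_le_of_ne (hq j) fun h' => h (hsup i j h'.symm)
        have hne : q j + s * p i ≠ 0 := by have := mul_nonneg hs (hp i); positivity
        exact ((lin (q j) (p i)).log hne).const_mul _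
    · have hne : β + s * a ≠ 0 := by positivity
      exact ((lin β a).log hne).const_mul _
  have hmono : MonotoneOn F (Set.Icc 0 1) := by
    refine monotoneOn_of_deriv_nonneg (convex_Icc 0 1) (fun s hs => (hF s hs.1).continuousAt.continuousWithinAt)
      (fun s hs => ?_) (fun s hs => ?_)
    · rw [interior_Icc] at hs
      exact (hF s hs.1.le).differentiableAt.differentiableWithinAt
    · rw [interior_Icc] at hs
      rw [(hF s hs.1.le).deriv]
      have := hQ s (a / (β + s * a)) hs.1.le
      have hne : 0 < β + s * a := by have := mul_nonneg hs.1.le ha; positivity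
      have e : 2 * (a / (β + s * a)) * a - (a / (β + s * a)) ^ 2 * (β + s * a) = a * (a / (β + s * a)) := by
        field_simp; ring
      rw [e] at this
      linarith
  have h01 := hmono (Set.left_mem_Icc.mpr zero_le_one) (Set.right_mem_Icc.mpr zero_le_one) zero_le_one
  simp only [F, zero_mul, add_zero, one_mul] at h01
  have hlast : ∑ j, ∑ i, w j i * p i * Real.log (q j + p i) ≤
      ∑ j, ∑ i, w j i * p i * Real.log (p i) + ∑ j, ∑ i, w j i * q j := by
    simp only [← Finset.sum_add_distrib]
    refine Finset.sum_le_sum fun j _ => Finset.sum_le_sum fun i _ => ?_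
    rcases (hp i).eq_or_lt with h | h
    · rw [← h]; simpa using mul_nonneg (hw j i) (hq j)
    · have h1 := Real.log_le_sub_one_of_pos (x := (q j + p i) / p i) (by have := hq j; positivity)
      have h2 : Real.log (q j + p i) ≤ Real.log (p i) + q j / p i := by
        rw [Real.log_div (by have := hq j; positivity) h.ne'] at h1
        have : (q j + p i) / p i - 1 = q j / p i := by field_simp; ring
        linarith
      calc _ ≤ w j i * p i * (Real.log (p i) + q j / p i) :=
            mul_le_mul_of_nonneg_left h2 (mul_nonneg (hw j i) h.le)
        _ = _ := by field_simp
  have : ∑ j, ∑ i, w j i * p i * (Real.log (p i) - Real.log (q j)) =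
      ∑ j, ∑ i, w j i * p i * Real.log (p i) - ∑ j, ∑ i, w j i * p i * Real.log (q j) := by
    simp only [mul_sub, Finset.sum_sub_distrib]
  rw [this]
  linarith

lemma bpc_elem (a b J : ℝ) (ha : 0 ≤ a) (ha1 : a ≤ 1) (hb : 0 ≤ b) (hJ : 0 < J) :
    a * Real.log J - J * b - 1 ≤
      a * (Real.log ((b + 1 / J) + a) - Real.log (b + 1 / J)) := by
  have hβ : 0 < b + 1 / J := by positivity
  rcases ha.eq_or_lt with h | h
  · rw [← h]; have := mul_nonneg hJ.le hb; linarith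
  · have h1 : Real.log a ≤ Real.log ((b + 1 / J) + a) := Real.log_le_log h (by linarith)
    have h2 := Real.log_le_sub_one_of_pos (x := J * (b + 1 / J)) (by positivity)
    rw [Real.log_mul hJ.ne' hβ.ne'] at h2
    have e : J * (b + 1 / J) - 1 = J * b := by field_simp; ring
    rw [e] at h2
    have h3 := Real.one_sub_inv_le_log_of_pos h
    have h4 : a * (1 - a⁻¹) ≤ a * Real.log a := mul_le_mul_of_nonneg_left h3 ha
    have h5 : a * (1 - a⁻¹) = a - 1 := by field_simp
    have h6 : a * Real.log a ≤ a * Real.log ((b + 1 / J) + a) := mul_le_mul_of_nonneg_left h1 ha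
    have h7 : a * (Real.log J + Real.log (b + 1 / J)) ≤ a * (J * b) := mul_le_mul_of_nonneg_left h2 ha
    have h8 : a * (J * b) ≤ 1 * (J * b) := mul_le_mul_of_nonneg_right ha1 (by positivity)
    nlinarith

/-- entropy in nats -/
noncomputable def bpcS {ι : Type*} [Fintype ι] [DecidableEq ι] {ρ : Matrix ι ι ℂ}
    (h : ρ.IsHermitian) : ℝ := -∑ i, h.eigenvalues i * Real.log (h.eigenvalues i)

lemma bpc_vn {ι : Type*} [Fintype ι] [DecidableEq ι] {ρ : Matrix ι ι ℂ}
    (h : ρ.IsHermitian) : vnEntropy ρ = bpcS h / Real.log 2 := by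
  rw [vnEntropy, dif_pos h, bpcS, neg_div, Finset.sum_div]
  simp only [Real.logb, mul_div_assoc]

lemma bpc_sum_eig {ι : Type*} [Fintype ι] [DecidableEq ι] {ρ : Matrix ι ι ℂ}
    (h : IsState ρ) : ∑ i, h.1.1.eigenvalues i = 1 := by
  have := h.1.1.trace_eq_sum_eigenvalues
  have h2 := congrArg Complex.re (this.symm.trans h.2)
  simpa using h2

lemma bpc_eig_le_one {ι : Type*} [Fintype ι] [DecidableEq ι] {ρ : Matrix ι ι ℂ}
    (h : IsState ρ) (i : ι) : h.1.1.eigenvalues i ≤ 1 := by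
  rw [← bpc_sum_eig h]
  exact Finset.single_le_sum (fun i _ => h.1.eigenvalues_nonneg i) (Finset.mem_univ i)

lemma bpc_vn_nonneg {ι : Type*} [Fintype ι] [DecidableEq ι] {ρ : Matrix ι ι ℂ}
    (h : IsState ρ) : 0 ≤ vnEntropy ρ := by
  rw [bpc_vn h.1.1]
  refine div_nonneg ?_ (Real.log_nonneg (by norm_num))
  rw [bpcS, neg_nonneg]
  exact Finset.sum_nonpos fun i _ => mul_nonpos_of_nonneg_of_nonpos (h.1.eigenvalues_nonneg i)
    (Real.log_nonpos (h.1.eigenvalues_nonneg i) (bpc_eig_le_one h i))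

lemma bpc_vn_le {ι : Type*} [Fintype ι] [DecidableEq ι] {ρ : Matrix ι ι ℂ}
    (h : IsState ρ) : vnEntropy ρ ≤ Real.log (Fintype.card ι) / Real.log 2 := by
  rw [bpc_vn h.1.1]
  refine div_le_div_of_nonneg_right ?_ (Real.log_nonneg (by norm_num))
  have hne : Nonempty ι := by
    by_contra hn
    rw [not_nonempty_iff] at hn
    have := h.2
    simp [Matrix.trace] at this
  have hN : 0 < (Fintype.card ι : ℝ) := by exact_mod_cast Fintype.card_pos
  set N := (Fintype.card ι : ℝ) with hNd
  have hs := bpc_sum_eig h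
  have key : ∀ i, - (h.1.1.eigenvalues i * Real.log (h.1.1.eigenvalues i)) ≤
      h.1.1.eigenvalues i * Real.log N + (1 / N - h.1.1.eigenvalues i) := by
    intro i
    set l := h.1.1.eigenvalues i
    have hl : 0 ≤ l := h.1.eigenvalues_nonneg i
    rcases hl.eq_or_lt with h0 | h0
    · rw [← h0]; simp; positivity
    · have h1 := Real.log_le_sub_one_of_pos (x := 1 / (N * l)) (by positivity)
      rw [one_div, Real.log_inv, Real.log_mul hN.ne' h0.ne'] at h1
      have h2 := mul_le_mul_of_nonneg_left h1 hl
      have e : l * ((N * l)⁻¹ - 1) = 1 / N - l := by field_simp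
      rw [e] at h2
      linarith
  rw [bpcS, ← Finset.sum_neg_distrib]
  refine (Finset.sum_le_sum fun i _ => key i).trans ?_
  rw [Finset.sum_add_distrib, Finset.sum_sub_distrib, ← Finset.sum_mul, hs]
  simp [← hNd, hN.ne']

lemma bpc_posSemidef_smul_sum {ι M : Type*} [Fintype ι] [DecidableEq ι] [Fintype M]
    (P : M → ℝ) (hP : IsDist P) (W : M → Matrix ι ι ℂ) (hW : ∀ m, IsState (W m)) :
    IsState (∑ m, (P m : ℂ) • W m) := by
  refine ⟨Matrix.posSemidef_sum _ fun m _ => (hW m).1.smul ?_, ?_⟩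
  · exact_mod_cast hP.1 m
  · rw [Matrix.trace_sum]
    simp only [Matrix.trace_smul, (hW _).2, smul_eq_mul, mul_one]
    exact_mod_cast hP.2

/-- one-shot converse -/
lemma bpc_oneshot {ι : Type*} [Fintype ι] [DecidableEq ι] (J : ℕ) (hJ : 1 ≤ J) (ε : ℝ)
    (ρ : Fin J → Matrix ι ι ℂ) (hρ : ∀ m, IsState (ρ m)) (D : Fin J → Matrix ι ι ℂ)
    (hD : IsPOVM D) (herr : ((J : ℝ))⁻¹ * ∑ m, ((1 - D m) * ρ m).trace.re ≤ ε) :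
    (1 - ε) * Real.logb 2 J - 3 / Real.log 2 ≤ holevo (fun _ : Fin J => (J : ℝ)⁻¹) ρ := by
  have hJ0 : 0 < (J : ℝ) := by exact_mod_cast hJ
  have hJl : 0 ≤ Real.log J := Real.log_nonneg (by exact_mod_cast hJ)
  have hdist : IsDist (fun _ : Fin J => (J : ℝ)⁻¹) :=
    ⟨fun _ => by positivity, by simp [hJ0.ne']⟩
  have hl2 : 0 < Real.log 2 := Real.log_pos (by norm_num)
  have hσ := bpc_posSemidef_smul_sum _ hdist ρ hρ
  unfold holevo
  set σ := ∑ m, (((J : ℝ)⁻¹ : ℝ) : ℂ) • ρ m with hσd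
  set q := hσ.1.1.eigenvalues with hq
  let p : Fin J → ι → ℝ := fun m => (hρ m).1.1.eigenvalues
  let w : Fin J → ι → ι → ℝ := fun m j i => Complex.normSq (bpcC (hρ m).1.1 hσ.1.1 j i)
  have hp0 : ∀ m i, 0 ≤ p m i := fun m i => (hρ m).1.eigenvalues_nonneg i
  have hq0 : ∀ j, 0 ≤ q j := fun j => hσ.1.eigenvalues_nonneg j
  have hw0 : ∀ m j i, 0 ≤ w m j i := fun m j i => Complex.normSq_nonneg _
  have hrow : ∀ m j, ∑ i, w m j i = 1 := fun m j => bpc_unit_rows (bpcC_mul_star _ _) j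
  have hcol : ∀ m i, ∑ j, w m j i = 1 := fun m i => bpc_unit_cols (bpcC_star_mul _ _) i
  have hqavg : ∀ j, q j = ∑ m, (J : ℝ)⁻¹ * ∑ i, w m j i * p m i := by
    intro j
    rw [hq, ← bpc_diag_self hσ.1.1 j]
    have : ∀ m, ∑ i, w m j i * p m i = _ := fun m => (bpc_diag (hρ m).1.1 hσ.1.1 j).symm
    simp only [this]
    generalize (hσ.1.1.eigenvectorUnitary : Matrix ι ι ℂ) = V
    rw [hσd, Finset.mul_sum, Finset.sum_mul, Matrix.sum_apply, Complex.re_sum]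
    refine Finset.sum_congr rfl fun m _ => ?_
    rw [Matrix.mul_smul, Matrix.smul_mul, Matrix.smul_apply, smul_eq_mul, Complex.re_ofReal_mul]
  have hsup : ∀ m i j, q j = 0 → w m j i * p m i = 0 := by
    intro m i j h
    rw [hqavg j] at h
    have h1 := (Finset.sum_eq_zero_iff_of_nonneg (fun m _ => mul_nonneg (by positivity)
      (Finset.sum_nonneg fun i _ => mul_nonneg (hw0 m j i) (hp0 m i)))).mp h m (Finset.mem_univ m)
    have h2 : ∑ i, w m j i * p m i = 0 := by
      rcases mul_eq_zero.mp h1 with h | h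
      · exact absurd h (by positivity)
      · exact h
    exact (Finset.sum_eq_zero_iff_of_nonneg (fun i _ => mul_nonneg (hw0 m j i) (hp0 m i))).mp h2 i
      (Finset.mem_univ i)
  have hD1 : ∀ m, (1 - D m).PosSemidef := by
    intro m
    have h1 : (1 - ∑ j, D j).PosSemidef := hD.2
    have h2 : (∑ j ∈ Finset.univ.erase m, D j).PosSemidef :=
      Matrix.posSemidef_sum _ fun j _ => hD.1 j
    have e : 1 - D m = (1 - ∑ j, D j) + ∑ j ∈ Finset.univ.erase m, D j := by
      rw [← Finset.add_sum_erase _ _ (Finset.mem_univ m)]; abel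
    rw [e]; exact h1.add h2
  let a : Fin J → ℝ := fun m => (ρ m * D m).trace.re
  let b : Fin J → ℝ := fun m => (σ * D m).trace.re
  have ha0 : ∀ m, 0 ≤ a m := fun m => bpc_trace_mul_nonneg (hρ m).1 (hD.1 m)
  have hb0 : ∀ m, 0 ≤ b m := fun m => bpc_trace_mul_nonneg hσ.1 (hD.1 m)
  have hae : ∀ m, ((1 - D m) * ρ m).trace.re = 1 - a m := by
    intro m
    rw [Matrix.trace_mul_comm, Matrix.mul_sub, Matrix.mul_one, Matrix.trace_sub, (hρ m).2]
    rfl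
  have ha1 : ∀ m, a m ≤ 1 := by
    intro m
    have := bpc_trace_mul_nonneg (hD1 m) (hρ m).1
    rw [hae] at this; linarith
  have hbs : ∑ m, b m ≤ 1 := by
    have h1 := bpc_trace_mul_nonneg hσ.1 (show (1 - ∑ j, D j).PosSemidef from hD.2)
    rw [Matrix.mul_sub, Matrix.mul_one, Matrix.trace_sub, hσ.2, Matrix.mul_sum, Matrix.trace_sum,
      Complex.sub_re, Complex.re_sum, Complex.one_re] at h1
    linarith
  have hm : ∀ m, a m * Real.log J - J * b m - 2 ≤
      ∑ j, ∑ i, w m j i * p m i * (Real.log (p m i) - Real.log (q j)) := by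
    intro m
    have h1 := bpc_elem (a m) (b m) J (ha0 m) (ha1 m) (hb0 m) hJ0
    have h2 := bpc_scalar (w m) (p m) q (a m) (b m + 1 / J) (hw0 m) (hp0 m) hq0 (ha0 m)
      (by have := hb0 m; positivity) (hsup m) (by
        simp only [← Finset.sum_mul, hrow, one_mul]
        exact (bpc_sum_eig hσ).le) (fun s x hs => by
        refine le_trans ?_ (bpc_core (hρ m).1 hσ.1 (hD.1 m) (hD1 m) (hsup m) s x hs)
        have : 0 ≤ x ^ 2 * (1 / J) := by positivity
        change 2 * x * a m - x ^ 2 * (b m + 1 / J + s * a m) ≤ 2 * x * a m - x ^ 2 * (b m + s * a m)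
        linarith)
    linarith
  have hrel : ∀ m, ∑ j, ∑ i, w m j i * p m i * (Real.log (p m i) - Real.log (q j)) =
      - bpcS (hρ m).1.1 - ∑ j, (∑ i, w m j i * p m i) * Real.log (q j) := by
    intro m
    simp only [mul_sub, Finset.sum_sub_distrib, Finset.sum_mul]
    congr 1
    rw [Finset.sum_comm, bpcS, neg_neg]
    refine Finset.sum_congr rfl fun i _ => ?_
    simp only [mul_assoc, ← Finset.sum_mul, hcol, one_mul]
    rfl
  have hchi : bpcS hσ.1.1 - ∑ m, (J : ℝ)⁻¹ * bpcS (hρ m).1.1 =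
      ∑ m, (J : ℝ)⁻¹ * ∑ j, ∑ i, w m j i * p m i * (Real.log (p m i) - Real.log (q j)) := by
    rw [Finset.sum_congr rfl fun m _ => congrArg (fun t => (J : ℝ)⁻¹ * t) (hrel m)]
    simp only [mul_sub, Finset.sum_sub_distrib]
    have : ∑ m, (J : ℝ)⁻¹ * ∑ j, (∑ i, w m j i * p m i) * Real.log (q j) = - bpcS hσ.1.1 := by
      rw [bpcS, neg_neg]
      simp only [Finset.mul_sum (a := (J : ℝ)⁻¹)]
      rw [Finset.sum_comm]
      refine Finset.sum_congr rfl fun j _ => ?_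
      rw [← hq]
      nth_rewrite 2 [hqavg j]
      rw [Finset.sum_mul]
      simp only [mul_assoc]
    rw [this]
    simp only [mul_neg, Finset.sum_neg_distrib]
    ring
  have hnat : (1 - ε) * Real.log J - 3 ≤ bpcS hσ.1.1 - ∑ m, (J : ℝ)⁻¹ * bpcS (hρ m).1.1 := by
    rw [hchi, ← Finset.mul_sum]
    have h1 := Finset.sum_le_sum fun m (_ : m ∈ Finset.univ) => hm m
    have h2 := mul_le_mul_of_nonneg_left h1 (inv_nonneg.mpr hJ0.le)
    refine le_trans ?_ h2
    simp only [hae, Finset.sum_sub_distrib] at herr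
    simp only [Finset.sum_sub_distrib, ← Finset.mul_sum, ← Finset.sum_mul]
    simp only [Finset.sum_const, Finset.card_univ, Fintype.card_fin, nsmul_eq_mul] at herr ⊢
    have e1 : (J : ℝ)⁻¹ * ((∑ m, a m) * Real.log J - J * ∑ m, b m - J * 2) =
       ((J : ℝ)⁻¹ * ∑ m, a m) * Real.log J - ∑ m, b m - 2 := by field_simp
    rw [e1]
    have e2 : (J : ℝ)⁻¹ * (J * 1 - ∑ m, a m) = 1 - (J : ℝ)⁻¹ * ∑ m, a m := by field_simp
    rw [e2] at herr
    have := mul_le_mul_of_nonneg_right (show 1 - ε ≤ (J : ℝ)⁻¹ * ∑ m, a m by linarith) hJl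
    linarith
  rw [bpc_vn hσ.1.1]
  have : ∑ m, (J : ℝ)⁻¹ * vnEntropy (ρ m) = (∑ m, (J : ℝ)⁻¹ * bpcS (hρ m).1.1) / Real.log 2 := by
    rw [Finset.sum_div]
    refine Finset.sum_congr rfl fun m _ => ?_
    rw [bpc_vn (hρ m).1.1, mul_div_assoc]
  rw [this, ← sub_div, Real.logb, ← mul_div_assoc, ← sub_div]
  exact div_le_div_of_nonneg_right hnat hl2.le


lemma bpc_trace_tensor {n : ℕ} {ι : Type*} [Fintype ι] [DecidableEq ι] (M : Fin n → Matrix ι ι ℂ) :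
    (tensorPow M).trace = ∏ k, (M k).trace := by
  simp only [Matrix.trace, Matrix.diag_apply, tensorPow, Matrix.of_apply]
  rw [Finset.prod_univ_sum, Fintype.piFinset_univ]

open Matrix in
lemma bpc_tensor_psd {n : ℕ} {ι : Type*} [Fintype ι] [DecidableEq ι] (M : Fin n → Matrix ι ι ℂ)
    (h : ∀ k, (M k).PosSemidef) : (tensorPow M).PosSemidef := by
  choose B hB using fun k => bpc_factor (h k)
  have : tensorPow M = (tensorPow B)ᴴ * tensorPow B := by
    ext i j
    simp only [tensorPow, Matrix.mul_apply, Matrix.of_apply, Matrix.conjTranspose_apply, hB]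
    rw [Finset.prod_univ_sum, Fintype.piFinset_univ]
    refine Finset.sum_congr rfl fun x _ => ?_
    rw [star_prod, Finset.prod_mul_distrib]
  rw [this]
  exact Matrix.posSemidef_conjTranspose_mul_self _

lemma bpc_cqPow_state {A ι : Type*} [Fintype ι] [DecidableEq ι] (W : A → Matrix ι ι ℂ)
    (hW : ∀ a, IsState (W a)) (n : ℕ) (x : Fin n → A) : IsState (cqPow W n x) :=
  ⟨bpc_tensor_psd _ fun k => (hW _).1, by
    rw [cqPow, bpc_trace_tensor]; exact Finset.prod_eq_one fun k _ => (hW _).2⟩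

lemma bpc_holevo_le {A ι : Type*} [Fintype A] [Fintype ι] [DecidableEq ι] (W : A → Matrix ι ι ℂ)
    (hW : ∀ a, IsState (W a)) (P : A → ℝ) (hP : IsDist P) :
    holevo P W ≤ Real.log (Fintype.card ι) / Real.log 2 := by
  have h1 := bpc_vn_le (bpc_posSemidef_smul_sum P hP W hW)
  have h2 : 0 ≤ ∑ a, P a * vnEntropy (W a) :=
    Finset.sum_nonneg fun a _ => mul_nonneg (hP.1 a) (bpc_vn_nonneg (hW a))
  unfold holevo
  linarith

/-- push the uniform message distribution to the channel inputs -/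
lemma bpc_push {X ι : Type*} [Fintype X] [Fintype ι] [DecidableEq ι] (W : X → Matrix ι ι ℂ)
    (J : ℕ) (P : Fin J → ℝ) (hP : IsDist P) (f : Fin J → X) :
    ∃ Q : X → ℝ, IsDist Q ∧ holevo Q W = holevo P (fun m => W (f m)) := by
  classical
  refine ⟨fun x => ∑ m with f m = x, P m, ⟨fun x => Finset.sum_nonneg fun m _ => hP.1 m, ?_⟩, ?_⟩
  · rw [← hP.2, ← Finset.sum_fiberwise (s := Finset.univ) (g := f)]
  · unfold holevo
    have e1 : ∑ x, ((∑ m with f m = x, P m : ℝ) : ℂ) • W x = ∑ m, (P m : ℂ) • W (f m) := by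
      rw [← Finset.sum_fiberwise (s := Finset.univ) (g := f)]
      refine Finset.sum_congr rfl fun x _ => ?_
      rw [Complex.ofReal_sum, Finset.sum_smul]
      refine Finset.sum_congr rfl fun m hm => ?_
      rw [(Finset.mem_filter.mp hm).2]
    have e2 : ∑ x, (∑ m with f m = x, P m) * vnEntropy (W x) = ∑ m, P m * vnEntropy (W (f m)) := by
      rw [← Finset.sum_fiberwise (s := Finset.univ) (g := f)]
      refine Finset.sum_congr rfl fun x _ => ?_
      rw [Finset.sum_mul]
      refine Finset.sum_congr rfl fun m hm => ?_
      rw [(Finset.mem_filter.mp hm).2]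
    rw [e1, e2]

lemma bpc_single {A ι : Type*} [Fintype A] [Fintype ι] [DecidableEq ι]
    (W : A → Matrix ι ι ℂ) (hW : ∀ a, IsState (W a)) (R : ℝ) (hR : 0 ≤ R)
    (hach : ∀ ε : ℝ, 0 < ε → ∀ δ : ℝ, 0 < δ → ∃ N : ℕ, ∀ n : ℕ, N ≤ n →
      ∃ J : ℕ, 1 ≤ J ∧ R - δ ≤ (1 / n : ℝ) * Real.logb 2 J ∧
        ∃ (f : Fin J → Fin n → A) (D : Fin J → Matrix (Fin n → ι) (Fin n → ι) ℂ), IsPOVM D ∧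
          ((J : ℝ))⁻¹ * ∑ m, ((1 - D m) * cqPow W n (f m)).trace.re ≤ ε) :
    R ≤ Filter.atTop.limsup (fun n : ℕ => (1 / n : ℝ) *
          sSup {x : ℝ | ∃ P : (Fin n → A) → ℝ, IsDist P ∧ x = holevo P (cqPow W n)}) := by
  have hl2 : 0 < Real.log 2 := Real.log_pos (by norm_num)
  set K : ℝ := Real.log (Fintype.card ι) / Real.log 2 with hK
  have hK0 : 0 ≤ K := div_nonneg (Real.log_natCast_nonneg _) hl2.le
  have hub : ∀ n : ℕ, ∀ x ∈ {x : ℝ | ∃ P : (Fin n → A) → ℝ, IsDist P ∧ x = holevo P (cqPow W n)},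
      x ≤ n * K := by
    rintro n x ⟨P, hP, rfl⟩
    have := bpc_holevo_le (cqPow W n) (bpc_cqPow_state W hW n) P hP
    rw [Fintype.card_fun, Fintype.card_fin, Nat.cast_pow, Real.log_pow, mul_div_assoc] at this
    exact this
  have hbdd : Filter.IsBoundedUnder (· ≤ ·) Filter.atTop (fun n : ℕ => (1 / n : ℝ) *
          sSup {x : ℝ | ∃ P : (Fin n → A) → ℝ, IsDist P ∧ x = holevo P (cqPow W n)}) := by
    refine Filter.isBoundedUnder_of ⟨K, fun n => ?_⟩
    have h1 := Real.sSup_le (hub n) (by positivity)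
    rcases Nat.eq_zero_or_pos n with h0 | h0
    · subst h0; simpa using hK0
    · have hn : 0 < (n : ℝ) := by exact_mod_cast h0
      calc _ ≤ (1 / n : ℝ) * (n * K) := mul_le_mul_of_nonneg_left h1 (by positivity)
        _ = K := by field_simp
  have key : ∀ η : ℝ, 0 < η → η < 1 → R - η * (R + 2) ≤ Filter.atTop.limsup (fun n : ℕ => (1 / n : ℝ) *
          sSup {x : ℝ | ∃ P : (Fin n → A) → ℝ, IsDist P ∧ x = holevo P (cqPow W n)}) := by
    intro η h0 h1
    refine Filter.le_limsup_of_frequently_le (Filter.Eventually.frequently ?_) hbdd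
    obtain ⟨N, hN⟩ := hach η h0 η h0
    obtain ⟨M, hM⟩ := exists_nat_gt (3 / Real.log 2 / η)
    filter_upwards [Filter.eventually_ge_atTop N, Filter.eventually_ge_atTop M,
      Filter.eventually_ge_atTop 1] with n hn1 hn2 hn3
    obtain ⟨J, hJ, hrate, f, D, hD, herr⟩ := hN n hn1
    have hone := bpc_oneshot J hJ η (fun m => cqPow W n (f m)) (fun m => bpc_cqPow_state W hW n _) D hD herr
    have hJ0 : 0 < (J : ℝ) := by exact_mod_cast hJ
    obtain ⟨Q, hQ, hQe⟩ := bpc_push (cqPow W n) J (fun _ => (J : ℝ)⁻¹)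
      ⟨fun _ => by positivity, by simp [hJ0.ne']⟩ f
    rw [← hQe] at hone
    have hsup := le_csSup ⟨n * K, hub n⟩ ⟨Q, hQ, rfl⟩
    have hn : 0 < (n : ℝ) := by exact_mod_cast hn3
    have hMn : (M : ℝ) ≤ n := by exact_mod_cast hn2
    have h3 : 1 / (n : ℝ) * (3 / Real.log 2) ≤ η := by
      rw [div_lt_iff₀ h0] at hM
      rw [one_div, inv_mul_le_iff₀ hn]
      exact hM.le.trans (mul_le_mul_of_nonneg_right hMn h0.le)
    have h4 := mul_le_mul_of_nonneg_left (hone.trans hsup) (show 0 ≤ 1 / (n : ℝ) by positivity)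
    refine le_trans ?_ h4
    have h5 := mul_le_mul_of_nonneg_left hrate (show 0 ≤ 1 - η by linarith)
    have h6 : (1 : ℝ) / n * ((1 - η) * Real.logb 2 J - 3 / Real.log 2) =
      (1 - η) * (1 / n * Real.logb 2 J) - 1 / n * (3 / Real.log 2) := by ring
    rw [h6]
    nlinarith [mul_pos h0 h0]
  refine le_of_forall_pos_le_add fun e he => ?_
  have hk := key (min (1 / 2) (e / (R + 2))) (by positivity) (lt_of_le_of_lt (min_le_left _ _) (by norm_num))
  have : min (1 / 2) (e / (R + 2)) * (R + 2) ≤ e := by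
    calc _ ≤ e / (R + 2) * (R + 2) := mul_le_mul_of_nonneg_right (min_le_right _ _) (by linarith)
      _ = e := by field_simp
  linarith

/-- Converse part of the broadcast-phase capacity theorem. -/
theorem broadcast_phase_converse
    {A ι₁ ι₂ : Type*} [Fintype A] [Fintype ι₁] [DecidableEq ι₁] [Fintype ι₂] [DecidableEq ι₂]
    (W1 : A → Matrix ι₁ ι₁ ℂ) (W2 : A → Matrix ι₂ ι₂ ℂ)
    (hW1 : ∀ a, IsState (W1 a)) (hW2 : ∀ a, IsState (W2 a))
    (R1 R2 : ℝ) (hR1 : 0 ≤ R1) (hR2 : 0 ≤ R2)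
    (hach : ∀ ε : ℝ, 0 < ε → ∀ δ : ℝ, 0 < δ → ∃ N : ℕ, ∀ n : ℕ, N ≤ n →
      ∃ J1 J2 : ℕ, 1 ≤ J1 ∧ 1 ≤ J2 ∧
        R1 - δ ≤ (1 / n : ℝ) * Real.logb 2 J1 ∧
        R2 - δ ≤ (1 / n : ℝ) * Real.logb 2 J2 ∧
        BroadcastCodeExists W1 W2 n J1 J2 ε ε) :
    R1 ≤ Filter.atTop.limsup (fun n : ℕ =>
        (1 / n : ℝ) *
          sSup {x : ℝ | ∃ P : (Fin n → A) → ℝ, IsDist P ∧ x = holevo P (cqPow W1 n)}) ∧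
    R2 ≤ Filter.atTop.limsup (fun n : ℕ =>
        (1 / n : ℝ) *
          sSup {x : ℝ | ∃ P : (Fin n → A) → ℝ, IsDist P ∧ x = holevo P (cqPow W2 n)}) := by
  constructor
  · refine bpc_single W1 hW1 R1 hR1 fun ε hε δ hδ => ?_
    obtain ⟨N, hN⟩ := hach ε hε δ hδ
    refine ⟨N, fun n hn => ?_⟩
    obtain ⟨J1, J2, hJ1, hJ2, h1, h2, w, D1, D2, hD1, hD2, e1, e2⟩ := hN n hn
    exact ⟨J1, hJ1, h1, fun m => w (m, ⟨0, hJ2⟩), D1 ⟨0, hJ2⟩, hD1 _, e1 _⟩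
  · refine bpc_single W2 hW2 R2 hR2 fun ε hε δ hδ => ?_
    obtain ⟨N, hN⟩ := hach ε hε δ hδ
    refine ⟨N, fun n hn => ?_⟩
    obtain ⟨J1, J2, hJ1, hJ2, h1, h2, w, D1, D2, hD1, hD2, e1, e2⟩ := hN n hn
    exact ⟨J2, hJ2, h2, fun m => w (⟨0, hJ1⟩, m), D2 ⟨0, hJ1⟩, hD2 _, e2 _⟩
end

section
/- Tender (gentle) operator lemma: Let ρ be a quantum state on a finite-dimensional complex Hilbert space H, and let X be a positive semidefinite operator on H with X ≤ id. If λ is a real number with 1 − tr(ρX) ≤ λ ≤ 1, then ‖ρ − √X ρ √X‖₁ ≤ √(8λ), where √X denotes the positive semidefinite square root of X. -/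
open scoped BigOperators ComplexOrder

noncomputable section

/-- The positive semidefinite square root of a positive semidefinite matrix
(definition of the older Mathlib, since removed). -/
noncomputable def Matrix.PosSemidef.sqrt {n 𝕜 : Type*} [Fintype n] [RCLike 𝕜] [DecidableEq n]
    {A : Matrix n n 𝕜} (hA : A.PosSemidef) : Matrix n n 𝕜 :=
  hA.1.eigenvectorUnitary.1 * Matrix.diagonal ((↑) ∘ Real.sqrt ∘ hA.1.eigenvalues) *
    (star hA.1.eigenvectorUnitary : Matrix n n 𝕜)

end
open Matrix in
theorem tender_cs {ι : Type*} [Fintype ι] (A B : Matrix ι ι ℂ) :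
    (A * B).trace.re ≤ √((A * Aᴴ).trace.re) * √((Bᴴ * B).trace.re) := by
  have h1 : (A * Aᴴ).trace.re = ∑ p : ι × ι, ‖A p.1 p.2‖ ^ 2 := by
    simp only [Matrix.trace, Matrix.diag, Matrix.mul_apply, Matrix.conjTranspose_apply,
      Complex.re_sum, Fintype.sum_prod_type]
    refine Finset.sum_congr rfl fun i _ => Finset.sum_congr rfl fun j _ => ?_
    rw [← Complex.normSq_eq_norm_sq, Complex.normSq_apply]
    simp
  have h2 : (Bᴴ * B).trace.re = ∑ p : ι × ι, ‖B p.2 p.1‖ ^ 2 := by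
    simp only [Matrix.trace, Matrix.diag, Matrix.mul_apply, Matrix.conjTranspose_apply,
      Complex.re_sum, Fintype.sum_prod_type]
    refine Finset.sum_congr rfl fun i _ => Finset.sum_congr rfl fun j _ => ?_
    rw [← Complex.normSq_eq_norm_sq, Complex.normSq_apply]
    simp
  have h3 : (A * B).trace.re ≤ ∑ p : ι × ι, ‖A p.1 p.2‖ * ‖B p.2 p.1‖ := by
    simp only [Matrix.trace, Matrix.diag, Matrix.mul_apply,
      Complex.re_sum, Fintype.sum_prod_type]
    refine Finset.sum_le_sum fun i _ => Finset.sum_le_sum fun j _ => ?_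
    rw [← norm_mul]
    exact Complex.re_le_norm _
  rw [h1, h2]
  refine h3.trans ?_
  have := Real.sum_mul_le_sqrt_mul_sqrt Finset.univ (fun p : ι × ι => ‖A p.1 p.2‖)
    (fun p => ‖B p.2 p.1‖)
  exact this

open Matrix in
theorem tender_polar {ι : Type*} [Fintype ι] [DecidableEq ι] (D : Matrix ι ι ℂ) :
    ∃ W : Matrix ι ι ℂ, W * Wᴴ * W = W ∧ (W * D).trace = (traceNorm D : ℂ) := by
  unfold traceNorm
  set hD := Matrix.posSemidef_conjTranspose_mul_self D with hDdef
  set e := hD.1.eigenvalues with he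
  have he0 : ∀ i, 0 ≤ e i := hD.eigenvalues_nonneg
  set V : Matrix ι ι ℂ := hD.1.eigenvectorUnitary.1 with hV
  have hVV : Vᴴ * V = 1 := by
    have := Unitary.coe_star_mul_self hD.1.eigenvectorUnitary
    simpa [Matrix.star_eq_conjTranspose] using this
  have hsp : Dᴴ * D = V * diagonal (fun i => (e i : ℂ)) * Vᴴ := by
    have := hD.1.spectral_theorem
    rw [Unitary.conjStarAlgAut_apply] at this
    exact this
  set T : Matrix ι ι ℂ := diagonal (fun i => (((√(e i))⁻¹ : ℝ) : ℂ)) with hT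
  have hTT : Tᴴ = T := by
    rw [hT, diagonal_conjTranspose]
    congr 1; ext i; simp
  have key : V * T * Vᴴ * (Dᴴ * D) = V * diagonal (fun i => ((√(e i) : ℝ) : ℂ)) * Vᴴ := by
    rw [hsp]
    calc V * T * Vᴴ * (V * diagonal (fun i => (e i : ℂ)) * Vᴴ)
        = V * T * (Vᴴ * V) * diagonal (fun i => (e i : ℂ)) * Vᴴ := by noncomm_ring
      _ = V * (T * diagonal (fun i => (e i : ℂ))) * Vᴴ := by rw [hVV]; noncomm_ring
      _ = _ := by
        rw [hT, diagonal_mul_diagonal]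
        congr 3; ext i
        rw [← Complex.ofReal_mul]
        congr 1
        rcases (he0 i).eq_or_lt with h | h
        · simp [← h]
        · have := Real.sqrt_pos.2 h
          field_simp
          rw [Real.sq_sqrt (he0 i)]
  refine ⟨V * T * Vᴴ * Dᴴ, ?_, ?_⟩
  · simp only [conjTranspose_mul, conjTranspose_conjTranspose, hTT]
    calc V * T * Vᴴ * Dᴴ * (D * (V * (T * Vᴴ))) * (V * T * Vᴴ * Dᴴ)
        = (V * T * Vᴴ * (Dᴴ * D)) * V * T * (Vᴴ * V) * T * Vᴴ * Dᴴ := by noncomm_ring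
      _ = V * diagonal (fun i => ((√(e i) : ℝ) : ℂ)) * (Vᴴ * V) * T * (Vᴴ * V) * T * Vᴴ * Dᴴ := by
          rw [key]; noncomm_ring
      _ = V * (diagonal (fun i => ((√(e i) : ℝ) : ℂ)) * T * T) * Vᴴ * Dᴴ := by
          rw [hVV]; noncomm_ring
      _ = _ := by
        rw [hT, diagonal_mul_diagonal, diagonal_mul_diagonal]
        congr 4; ext i
        rw [← Complex.ofReal_mul, ← Complex.ofReal_mul]
        congr 1
        by_cases h : √(e i) = 0
        · simp [h]
        · field_simp
  · rw [Matrix.mul_assoc, key, Matrix.trace_mul_cycle, hVV, Matrix.one_mul, trace_diagonal]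
    push_cast; rfl

open Matrix in
theorem tender_sqrt {ι : Type*} [Fintype ι] [DecidableEq ι] (X : Matrix ι ι ℂ)
    (hX : X.PosSemidef) :
    hX.sqrtᴴ = hX.sqrt ∧ hX.sqrt * hX.sqrt = X ∧
      ((1 - X).PosSemidef → (hX.sqrt - X).PosSemidef) := by
  have he0 : ∀ i, 0 ≤ hX.1.eigenvalues i := hX.eigenvalues_nonneg
  unfold Matrix.PosSemidef.sqrt
  set e := hX.1.eigenvalues with he
  set V : Matrix ι ι ℂ := hX.1.eigenvectorUnitary.1 with hV
  have hVV : Vᴴ * V = 1 := by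
    have := Unitary.coe_star_mul_self hX.1.eigenvectorUnitary
    simpa [Matrix.star_eq_conjTranspose] using this
  have hsp : X = V * diagonal (fun i => (e i : ℂ)) * Vᴴ := by
    have := hX.1.spectral_theorem
    rw [Unitary.conjStarAlgAut_apply] at this
    exact this
  have he1 : (1 - X).PosSemidef → ∀ i, e i ≤ 1 := by
    intro hXle
    have h := hXle.conjTranspose_mul_mul_same V
    have h2 : Vᴴ * (1 - X) * V = diagonal (fun i => ((1 - e i : ℝ) : ℂ)) := by
      calc Vᴴ * (1 - X) * V = Vᴴ * V - Vᴴ * X * V := by noncomm_ring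
        _ = Vᴴ * V - (Vᴴ * V) * diagonal (fun i => (e i : ℂ)) * (Vᴴ * V) := by
          conv_lhs => rw [hsp]
          noncomm_ring
        _ = _ := by
          rw [hVV, Matrix.one_mul, Matrix.mul_one, ← diagonal_one, diagonal_sub]
          congr 1; ext i; simp
    rw [h2, posSemidef_diagonal_iff] at h
    intro i
    have := h i
    rw [Complex.zero_le_real] at this
    linarith
  set T : Matrix ι ι ℂ := diagonal (fun i => ((√(e i) : ℝ) : ℂ)) with hT
  have hTT : Tᴴ = T := by
    rw [hT, diagonal_conjTranspose]
    congr 1; ext i; simp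
  change (V * T * Vᴴ)ᴴ = V * T * Vᴴ ∧ V * T * Vᴴ * (V * T * Vᴴ) = X ∧
    ((1 - X).PosSemidef → (V * T * Vᴴ - X).PosSemidef)
  refine ⟨?_, ?_, ?_⟩
  · simp only [conjTranspose_mul, conjTranspose_conjTranspose, hTT, Matrix.mul_assoc]
  · calc V * T * Vᴴ * (V * T * Vᴴ) = V * T * (Vᴴ * V) * T * Vᴴ := by noncomm_ring
      _ = V * (T * T) * Vᴴ := by rw [hVV]; noncomm_ring
      _ = X := by
        rw [hT, diagonal_mul_diagonal, hsp]
        congr 3; ext i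
        rw [← Complex.ofReal_mul, Real.mul_self_sqrt (he0 i)]
  · intro hXle
    have : V * T * Vᴴ - X = V * diagonal (fun i => ((√(e i) - e i : ℝ) : ℂ)) * Vᴴ := by
      conv_lhs => rw [hsp]
      rw [← Matrix.sub_mul, ← Matrix.mul_sub, hT, diagonal_sub]
      congr 3; ext i; simp
    rw [this]
    refine PosSemidef.mul_mul_conjTranspose_same ?_ V
    rw [posSemidef_diagonal_iff]
    intro i
    rw [Complex.zero_le_real, sub_nonneg]
    refine Real.le_sqrt_of_sq_le ?_
    nlinarith [he0 i, he1 hXle i]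

open Matrix in
theorem tender_trace {ι : Type*} [Fintype ι] (P B : Matrix ι ι ℂ) (hP : P.PosSemidef) :
    0 ≤ (B * P * Bᴴ).trace.re :=
  (Complex.le_def.1 (hP.mul_mul_conjTranspose_same B).trace_nonneg).1

open Matrix in
theorem tender_proj {ι : Type*} [Fintype ι] [DecidableEq ι] (P : Matrix ι ι ℂ)
    (h1 : Pᴴ = P) (h2 : P * P = P) : (1 - P).PosSemidef := by
  have : 1 - P = (1 - P)ᴴ * (1 - P) := by
    rw [conjTranspose_sub, h1, conjTranspose_one]
    calc 1 - P = 1 - P - P + P := by abel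
      _ = 1 - P - P + P * P := by rw [h2]
      _ = _ := by noncomm_ring
  rw [this]
  exact posSemidef_conjTranspose_mul_self _

open Matrix in
/-- Tender (gentle) operator lemma. -/
theorem tender_operator
    {ι : Type*} [Fintype ι] [DecidableEq ι]
    (ρ X : Matrix ι ι ℂ) (hρ : IsState ρ) (hX : X.PosSemidef) (hXle : loewnerLE X 1)
    (lam : ℝ) (hlam₁ : 1 - (ρ * X).trace.re ≤ lam) (hlam₂ : lam ≤ 1) :
    traceNorm (ρ - hX.sqrt * ρ * hX.sqrt) ≤ Real.sqrt (8 * lam) := by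
  obtain ⟨hS1, hS2, hS3⟩ := tender_sqrt X hX
  replace hS3 := hS3 hXle
  generalize hX.sqrt = S at *
  obtain ⟨W, hW, hWt⟩ := tender_polar (ρ - S * ρ * S)
  obtain ⟨hρ0, hρ1⟩ := hρ
  obtain ⟨B, rfl⟩ : ∃ B : Matrix ι ι ℂ, ρ = Bᴴ * B :=
    ⟨hρ0.sqrt, by
      have hs := tender_sqrt ρ hρ0
      rw [hs.1, hs.2.1]⟩
  have hBB : (B * Bᴴ).trace = 1 := by rw [Matrix.trace_mul_comm, hρ1]
  have hP1 : (1 - W * Wᴴ).PosSemidef := tender_proj _ (by simp) (by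
    rw [← Matrix.mul_assoc, hW])
  have hP2 : (1 - Wᴴ * W).PosSemidef := tender_proj _ (by simp) (by
    rw [Matrix.mul_assoc, ← Matrix.mul_assoc W, hW])
  have hXt : (Bᴴ * B * X).trace = (B * X * Bᴴ).trace := by
    rw [Matrix.mul_assoc, Matrix.trace_mul_comm]
  rw [hXt] at hlam₁
  have hlam0 : 0 ≤ lam := by
    have := tender_trace _ B hXle
    rw [Matrix.mul_sub, Matrix.sub_mul, Matrix.mul_one, trace_sub, hBB] at this
    simp at this
    linarith
  have hSS : (B * ((1 - S) * (1 - S)) * Bᴴ).trace.re ≤ lam := by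
    have := tender_trace _ B hS3
    have h : B * ((1 - S) * (1 - S)) * Bᴴ
        = B * Bᴴ - B * X * Bᴴ - (B * (S - X) * Bᴴ) - (B * (S - X) * Bᴴ) := by
      rw [← hS2]; noncomm_ring
    rw [h]
    simp only [trace_sub, hBB, Complex.sub_re, Complex.one_re]
    linarith
  -- first term
  have t1 : (W * ((1 - S) * (Bᴴ * B))).trace.re ≤ √lam := by
    have e : (W * ((1 - S) * (Bᴴ * B))).trace = ((B * W) * ((1 - S) * Bᴴ)).trace := by
      rw [show W * ((1 - S) * (Bᴴ * B)) = (W * ((1 - S) * Bᴴ)) * B by noncomm_ring,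
        Matrix.trace_mul_comm, Matrix.mul_assoc]
    rw [e]
    refine (tender_cs _ _).trans ?_
    have a : ((B * W) * (B * W)ᴴ).trace.re ≤ 1 := by
      have := tender_trace _ B hP1
      rw [Matrix.mul_sub, Matrix.sub_mul, Matrix.mul_one, trace_sub, hBB] at this
      rw [conjTranspose_mul]
      simp only [Matrix.mul_assoc, Complex.sub_re, Complex.one_re] at this ⊢
      linarith
    have b : (((1 - S) * Bᴴ)ᴴ * ((1 - S) * Bᴴ)).trace.re ≤ lam := by
      simpa [hS1, Matrix.mul_assoc] using hSS
    calc _ ≤ √1 * √lam := by gcongr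
      _ = _ := by simp
  have t2 : (W * (S * (Bᴴ * B) * (1 - S))).trace.re ≤ √lam := by
    have e : (W * (S * (Bᴴ * B) * (1 - S))).trace = ((B * (1 - S)) * (W * S * Bᴴ)).trace := by
      rw [show W * (S * (Bᴴ * B) * (1 - S)) = (W * S * Bᴴ) * (B * (1 - S)) by noncomm_ring,
        Matrix.trace_mul_comm]
    rw [e]
    refine (tender_cs _ _).trans ?_
    have a : ((W * S * Bᴴ)ᴴ * (W * S * Bᴴ)).trace.re ≤ 1 := by
      have h1 := tender_trace _ (B * S) hP2
      have h2 := tender_trace _ B hXle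
      rw [← hS2] at h2
      simp only [Matrix.mul_sub, Matrix.sub_mul, Matrix.mul_one, trace_sub, hBB,
        conjTranspose_mul, hS1, conjTranspose_conjTranspose,
        Matrix.mul_assoc, Complex.sub_re, Complex.one_re] at h1 h2 ⊢
      linarith
    have b : ((B * (1 - S)) * (B * (1 - S))ᴴ).trace.re ≤ lam := by
      simpa [hS1, Matrix.mul_assoc] using hSS
    calc _ ≤ √lam * √1 := by gcongr
      _ = _ := by simp
  have hsum : traceNorm (Bᴴ * B - S * (Bᴴ * B) * S) ≤ 2 * √lam := by
    have h : W * (Bᴴ * B - S * (Bᴴ * B) * S)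
        = W * ((1 - S) * (Bᴴ * B)) + W * (S * (Bᴴ * B) * (1 - S)) := by noncomm_ring
    have h2 := congrArg Complex.re hWt
    rw [h, trace_add, Complex.add_re, Complex.ofReal_re] at h2
    linarith
  refine hsum.trans (Real.le_sqrt_of_sq_le ?_)
  rw [mul_pow, Real.sq_sqrt hlam0]
  linarith
end

section
/- Sandwiched detection success bound (abstract form of the paper's analysis of errors of the first kind): Let ρ be a quantum state on a finite-dimensional complex Hilbert space H, let Π̄ be an orthogonal projection on H, and let Π′ be a positive semidefinite operator on H with Π′ ≤ id. If tr(ρ Π̄) ≥ 1 − λ and tr(ρ Π′) ≥ 1 − λ′ for reals λ, λ′ with 0 ≤ λ ≤ 1, then tr(ρ · Π̄ Π′ Π̄) ≥ 1 − λ′ − √(8λ). -/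
open scoped BigOperators ComplexOrder

open scoped MatrixOrder in
theorem trace_mul_psd_re_nonneg {ι : Type*} [Fintype ι] [DecidableEq ι]
    {A X : Matrix ι ι ℂ} (hA : A.PosSemidef) (hX : X.PosSemidef) : 0 ≤ (A * X).trace.re := by
  obtain ⟨B, rfl⟩ := CStarAlgebra.nonneg_iff_eq_star_mul_self.mp hA.nonneg
  rw [Matrix.star_eq_conjTranspose, Matrix.mul_assoc, Matrix.trace_mul_comm]
  exact (Complex.le_def.mp (hX.mul_mul_conjTranspose_same B).trace_nonneg).1

/-- Sandwiched detection success bound (errors of the first kind). -/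
theorem sandwiched_detection_success
    {ι : Type*} [Fintype ι] [DecidableEq ι]
    (ρ Pbar P' : Matrix ι ι ℂ) (hρ : IsState ρ)
    (hPbar : Pbar.IsHermitian ∧ Pbar * Pbar = Pbar)
    (hP' : P'.PosSemidef) (hP'le : loewnerLE P' 1)
    (lam lam' : ℝ) (hlam0 : 0 ≤ lam) (hlam1 : lam ≤ 1)
    (h1 : 1 - lam ≤ (ρ * Pbar).trace.re)
    (h2 : 1 - lam' ≤ (ρ * P').trace.re) :
    1 - lam' - Real.sqrt (8 * lam) ≤ (ρ * (Pbar * P' * Pbar)).trace.re := by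
  obtain ⟨hρ, htr⟩ := hρ
  obtain ⟨hH, hI⟩ := hPbar
  unfold loewnerLE at hP'le
  obtain ⟨Q, hQ⟩ : ∃ Q, Q = 1 - Pbar := ⟨_, rfl⟩
  have hP : Pbar = 1 - Q := by rw [hQ]; abel
  have hQH : Q.conjTranspose = Q := by
    rw [hQ, Matrix.conjTranspose_sub, Matrix.conjTranspose_one, hH.eq]
  have hQQ : Q * Q = Q := by rw [hQ]; noncomm_ring; rw [hI]; module
  have ha : (ρ * P').trace.re ≤ 1 := by
    have := trace_mul_psd_re_nonneg hρ hP'le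
    rw [Matrix.mul_sub, Matrix.trace_sub, Matrix.mul_one, htr] at this
    simpa using this
  have hc : (ρ * (Q * P' * Q)).trace.re ≤ lam := by
    have := trace_mul_psd_re_nonneg hρ (hP'le.mul_mul_conjTranspose_same Q)
    rw [hQH, show Q * (1 - P') * Q = 1 - Pbar - Q * P' * Q by
      rw [← hQ, mul_sub, sub_mul, mul_one, hQQ], Matrix.mul_sub, Matrix.mul_sub,
      Matrix.trace_sub, Matrix.trace_sub, Matrix.mul_one, htr] at this
    simp only [Complex.sub_re, Complex.one_re] at this
    linarith
  have hc0 : 0 ≤ (ρ * (Q * P' * Q)).trace.re := by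
    have := trace_mul_psd_re_nonneg hρ (hP'.mul_mul_conjTranspose_same Q)
    rwa [hQH] at this
  obtain ⟨x, hx⟩ : ∃ x, x = (ρ * (Q * P' + P' * Q)).trace.re := ⟨_, rfl⟩
  have key : ∀ s : ℝ, 0 ≤ s * s * (ρ * P').trace.re - s * x + (ρ * (Q * P' * Q)).trace.re := by
    intro s
    have := trace_mul_psd_re_nonneg hρ
      (hP'.mul_mul_conjTranspose_same (s • (1 : Matrix ι ι ℂ) - Q))
    rw [Matrix.conjTranspose_sub, Matrix.conjTranspose_smul, Matrix.conjTranspose_one, hQH,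
      star_trivial, show (s • (1 : Matrix ι ι ℂ) - Q) * P' * (s • (1 : Matrix ι ι ℂ) - Q)
        = (s * s) • P' - s • (Q * P' + P' * Q) + Q * P' * Q by
        simp only [sub_mul, mul_sub, smul_mul_assoc, mul_smul_comm, one_mul, mul_one, smul_add,
          smul_smul, smul_sub]
        abel] at this
    simp only [Matrix.mul_add ρ (_ - _), Matrix.mul_sub, Matrix.mul_smul, Matrix.trace_add (_ - _),
      Matrix.trace_sub, Matrix.trace_smul, Complex.add_re, Complex.sub_re, Complex.smul_re,
      smul_eq_mul] at this
    rw [hx]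
    exact this
  have hb : (ρ * (Pbar * P' * Pbar)).trace.re
      = (ρ * P').trace.re - x + (ρ * (Q * P' * Q)).trace.re := by
    rw [hx, ← Complex.sub_re, ← Complex.add_re, ← Matrix.trace_sub, ← Matrix.trace_add,
      ← Matrix.mul_sub, ← Matrix.mul_add, hP]
    congr 3
    noncomm_ring
  have hxx : x ≤ Real.sqrt (8 * lam) := by
    apply Real.le_sqrt_of_sq_le
    nlinarith [key (x / 2), mul_nonneg (sq_nonneg x) (sub_nonneg.mpr ha)]
  rw [hb]
  linarith
end
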